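/- arXiv:1410.0872 — 8 statements merged into one kernel-verified Lean document; each statement's English description precedes it below -/
import Mathlib

section
/- Let k be a field, n ≥ 2 an integer, F ∈ k[X,Y] a homogeneous polynomial of degree n (viewed in k[X,Y,Z]), and S := k[X,Y,Z]/(Z^n − F(X,Y)). Let a, b, c ≥ 1 be integers and write c = nq + r with integers q ≥ 0 and 0 ≤ r ≤ n−1. Define S-linear maps ψ : Syz_S(X^a, Y^b, Z^{c+n−2r}) → Syz_S(X^a, Y^b, F^q) × Syz_S(X^a, Y^b, F^{q+1}) by ψ(h₁,h₂,h₃) := ((h₁, h₂, Z^{n−r}·h₃), (−Z^r·h₁, −Z^r·h₂, −h₃)) and φ : Syz_S(X^a, Y^b, F^q) × Syz_S(X^a, Y^b, F^{q+1}) → Syz_S(X^a, Y^b, Z^c) by φ((f₁,f₂,f₃),(g₁,g₂,g₃)) := (Z^r·f₁ + g₁, Z^r·f₂ + g₂, f₃ + Z^{n−r}·g₃). Then ψ and φ are well defined (their values are again syzygies), ψ is injective, φ is surjective, and the image of ψ equals the kernel of φ; in other words, 0 → Syz_S(X^a,Y^b,Z^{c+n−2r}) → Syz_S(X^a,Y^b,F^q)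 ⊕ Syz_S(X^a,Y^b,F^{q+1}) → Syz_S(X^a,Y^b,Z^c) → 0 is a short exact sequence of S-modules. -/
/-!
Write `A = k[X,Y]`. Apart from the surjectivity of `φ`, everything is a formal consequence of
`Z^n = F` in `S`. For the surjectivity, the point is that `S = A[Z]/(Z^n - F)` is free over `A`
with basis `1, Z, …, Z^(n-1)`, because `Z^n - F` is monic in `Z`.

Represent a syzygy `w` of `(X^a, Y^b, Z^c)` by polynomials `p₀, p₁, p₂ ∈ A[Z]` of degree `< n`,
and split `p₀ = Z^r f₀ + g₀`, `p₁ = Z^r f₁ + g₁` with `deg gᵢ < r`, and `p₂ = Z^(n-r) g₂ + f₂` with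
`deg f₂ < n - r`. Since `Z^c = Z^r F^q` and `Z^n = F` in `S`, the relation satisfied by `w` reads
`Z^r (f₀ X^a + f₁ Y^b + f₂ F^q) + (g₀ X^a + g₁ Y^b + g₂ F^(q+1)) = 0`.
The left side has degree `< n` in `Z` and its second summand has degree `< r`, so both parts vanish
already in `A[Z]` (`eq_zero_of_X_pow_mul_add`). Hence `f` and `g` are syzygies, and they map to `w`.
The freeness of `S` enters through `exists_rep` and `eq_zero_of_toQuot`.
-/

open MvPolynomial

set_option synthInstance.maxHeartbeats 1000000
set_option maxHeartbeats 1000000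

noncomputable section

abbrev MvP (k : Type*) [Field k] : Type _ := MvPolynomial (Fin 3) k

/-- The quotient of `k[X,Y,Z]` by the principal ideal generated by `G`. -/
abbrev QuotG {k : Type*} [Field k] (G : MvP k) : Type _ := MvP k ⧸ Ideal.span {G}

def qmk {k : Type*} [Field k] (G : MvP k) : MvP k →+* QuotG G := Ideal.Quotient.mk _

def isSyz {S : Type*} [CommRing S] (u v w : S) (g : Fin 3 → S) : Prop :=
  g 0 * u + g 1 * v + g 2 * w = 0

/-- The map `ψ(h₁,h₂,h₃) := ((h₁, h₂, Z^{n-r}·h₃), (-Z^r·h₁, -Z^r·h₂, -h₃))`. -/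
def psiMap {S : Type*} [CommRing S] (n r : ℕ) (z : S) (h : Fin 3 → S) :
    (Fin 3 → S) × (Fin 3 → S) :=
  (![h 0, h 1, z ^ (n - r) * h 2], ![-(z ^ r * h 0), -(z ^ r * h 1), -(h 2)])

/-- The map `φ((f₁,f₂,f₃),(g₁,g₂,g₃)) := (Z^r·f₁ + g₁, Z^r·f₂ + g₂, f₃ + Z^{n-r}·g₃)`. -/
def phiMap {S : Type*} [CommRing S] (n r : ℕ) (z : S) (fg : (Fin 3 → S) × (Fin 3 → S)) :
    Fin 3 → S :=
  ![z ^ r * fg.1 0 + fg.2 0, z ^ r * fg.1 1 + fg.2 1, fg.1 2 + z ^ (n - r) * fg.2 2]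

/-! ### Splitting polynomials at a power of the variable -/

section PolynomialSplitting

open scoped Polynomial

variable {A : Type*} [CommRing A]

lemma exists_split [Nontrivial A] (p : A[X]) (m l : ℕ) (hp : p.degree < ((m + l : ℕ) : WithBot ℕ)) :
    ∃ d t : A[X], p = Polynomial.X ^ m * d + t ∧ d.degree < (l : WithBot ℕ) ∧
      t.degree < (m : WithBot ℕ) := by
  have hmon : (Polynomial.X ^ m : A[X]).Monic := Polynomial.monic_X_pow m
  have ht : (p %ₘ Polynomial.X ^ m).degree < (m : WithBot ℕ) := by
    simpa using Polynomial.degree_modByMonic_lt p hmon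
  refine ⟨p /ₘ Polynomial.X ^ m, p %ₘ Polynomial.X ^ m, ?_, ?_, ht⟩
  · rw [add_comm]; exact (Polynomial.modByMonic_add_div p (Polynomial.X ^ m)).symm
  · rw [Polynomial.degree_lt_iff_coeff_zero] at hp ht ⊢
    intro j hj
    have h := congrArg (fun s => Polynomial.coeff s (j + m))
      (Polynomial.modByMonic_add_div p (Polynomial.X ^ m : A[X]))
    simp only [Polynomial.coeff_add, Polynomial.coeff_X_pow_mul] at h
    rw [ht _ (by omega), hp _ (by omega), zero_add] at h
    exact h

lemma eq_zero_of_X_pow_mul_add (m : ℕ) (P Q : A[X]) (hQ : Q.degree < (m : WithBot ℕ))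
    (h : Polynomial.X ^ m * P + Q = 0) : P = 0 ∧ Q = 0 := by
  have hP : P = 0 := by
    ext j
    have h' := congrArg (fun s => Polynomial.coeff s (j + m)) h
    rw [Polynomial.degree_lt_iff_coeff_zero] at hQ
    simp only [Polynomial.coeff_add, Polynomial.coeff_X_pow_mul, Polynomial.coeff_zero] at h'
    rw [hQ _ (by omega), add_zero] at h'
    simpa using h'
  subst hP
  exact ⟨rfl, by simpa using h⟩

lemma degree_syz_lt (m : ℕ) (u v w : A) (f g h : A[X]) (hf : f.degree < (m : WithBot ℕ))
    (hg : g.degree < (m : WithBot ℕ)) (hh : h.degree < (m : WithBot ℕ)) :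
    (f * Polynomial.C u + g * Polynomial.C v + h * Polynomial.C w).degree < (m : WithBot ℕ) := by
  rw [Polynomial.degree_lt_iff_coeff_zero] at *
  intro j hj
  simp [hf j hj, hg j hj, hh j hj]

end PolynomialSplitting

/-! ### `S` as a free `k[X,Y]`-module -/

section FreeBasis

variable {k : Type*} [Field k]

/-- The identification `k[X,Y][Z] → k[X,Y,Z]`; `X` and `Y` are the variables `0` and `1`
and `Z` is the variable `2`. -/
def toMv : Polynomial (MvPolynomial (Fin 2) k) →+* MvP k :=
  Polynomial.eval₂RingHom (rename (Fin.castSucc : Fin 2 → Fin 3) :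
    MvPolynomial (Fin 2) k →ₐ[k] MvP k).toRingHom (X 2)

/-- The inverse identification `k[X,Y,Z] → k[X,Y][Z]`. -/
def ofMv : MvP k →+* Polynomial (MvPolynomial (Fin 2) k) :=
  eval₂Hom (Polynomial.C.comp MvPolynomial.C)
    ![Polynomial.C (X 0), Polynomial.C (X 1), Polynomial.X]

@[simp] lemma toMv_X : toMv (Polynomial.X : Polynomial (MvPolynomial (Fin 2) k)) = X 2 := by
  simp [toMv]

@[simp] lemma toMv_C (p : MvPolynomial (Fin 2) k) :
    toMv (Polynomial.C p) = rename Fin.castSucc p := by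
  simp [toMv]

lemma ofMv_X_two : ofMv (X 2 : MvP k) = Polynomial.X := by
  simp [ofMv]

lemma ofMv_rename (p : MvPolynomial (Fin 2) k) :
    ofMv (rename Fin.castSucc p) = Polynomial.C p := by
  have : (ofMv (k := k)).comp (rename (Fin.castSucc : Fin 2 → Fin 3) :
      MvPolynomial (Fin 2) k →ₐ[k] MvP k).toRingHom = Polynomial.C := by
    apply MvPolynomial.ringHom_ext
    · intro x; simp [ofMv]
    · intro i; fin_cases i <;> simp [ofMv]
  exact congrArg (fun f => f p) this

lemma ofMv_toMv (p : Polynomial (MvPolynomial (Fin 2) k)) : ofMv (toMv p) = p := by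
  have : (ofMv (k := k)).comp toMv = RingHom.id _ := by
    apply Polynomial.ringHom_ext
    · intro x; simp [ofMv_rename]
    · simp [ofMv_X_two]
  exact congrArg (fun f => f p) this

lemma toMv_ofMv (p : MvP k) : toMv (ofMv p) = p := by
  have : (toMv (k := k)).comp ofMv = RingHom.id _ := by
    apply MvPolynomial.ringHom_ext
    · intro x; simp [ofMv]
    · intro i; fin_cases i <;> simp [ofMv]
  exact congrArg (fun f => f p) this

/-- The projection `k[X,Y][Z] → S = k[X,Y,Z]/(G)`. -/
def toQuot (G : MvP k) : Polynomial (MvPolynomial (Fin 2) k) →+* QuotG G :=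
  (qmk G).comp toMv

/-- The equation `Z^n - F`, for `F` the image of `F' ∈ k[X,Y]`, read in `k[X,Y][Z]`. -/
lemma ofMv_relation (n : ℕ) (F' : MvPolynomial (Fin 2) k) :
    ofMv (X 2 ^ n - rename Fin.castSucc F') = Polynomial.X ^ n - Polynomial.C F' := by
  rw [map_sub, map_pow, ofMv_X_two, ofMv_rename]

/-- The powers `1, Z, …, Z^(n-1)` generate `S` over `k[X,Y]`. -/
lemma exists_rep (n : ℕ) (hn : n ≠ 0) (F' : MvPolynomial (Fin 2) k)
    (s : QuotG (X 2 ^ n - rename Fin.castSucc F' : MvP k)) :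
    ∃ p : Polynomial (MvPolynomial (Fin 2) k), p.degree < (n : WithBot ℕ) ∧
      toQuot (X 2 ^ n - rename Fin.castSucc F') p = s := by
  obtain ⟨P, rfl⟩ := Ideal.Quotient.mk_surjective s
  have hmon := Polynomial.monic_X_pow_sub_C F' hn
  refine ⟨ofMv P %ₘ (Polynomial.X ^ n - Polynomial.C F'), ?_, ?_⟩
  · have h := Polynomial.degree_modByMonic_lt (ofMv P) hmon
    rwa [Polynomial.degree_X_pow_sub_C (Nat.pos_of_ne_zero hn)] at h
  · have h0 : toQuot (X 2 ^ n - rename Fin.castSucc F')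
        (Polynomial.X ^ n - Polynomial.C F') = 0 := by
      rw [← ofMv_relation, toQuot, RingHom.comp_apply, toMv_ofMv]
      exact Ideal.Quotient.eq_zero_iff_mem.2 (Ideal.mem_span_singleton_self _)
    have h := congrArg (toQuot (X 2 ^ n - rename Fin.castSucc F'))
      (Polynomial.modByMonic_add_div (ofMv P) (Polynomial.X ^ n - Polynomial.C F'))
    rw [map_add, map_mul, h0, zero_mul, add_zero] at h
    rw [h, toQuot, RingHom.comp_apply, toMv_ofMv]
    rfl

/-- The powers `1, Z, …, Z^(n-1)` are linearly independent over `k[X,Y]` in `S`. -/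
lemma eq_zero_of_toQuot (n : ℕ) (hn : n ≠ 0) (F' : MvPolynomial (Fin 2) k)
    (p : Polynomial (MvPolynomial (Fin 2) k)) (hp : p.degree < (n : WithBot ℕ))
    (h : toQuot (X 2 ^ n - rename Fin.castSucc F') p = 0) : p = 0 := by
  have hmem := Ideal.mem_span_singleton.1 (Ideal.Quotient.eq_zero_iff_mem.1 h)
  have hdvd := map_dvd ofMv hmem
  rw [ofMv_relation, ofMv_toMv] at hdvd
  by_contra hne
  refine (Polynomial.monic_X_pow_sub_C F' hn).not_dvd_of_degree_lt hne ?_ hdvd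
  rwa [Polynomial.degree_X_pow_sub_C (Nat.pos_of_ne_zero hn)]

lemma exists_eq_rename (F : MvP k) (hF : ∀ d ∈ F.support, d 2 = 0) :
    ∃ F' : MvPolynomial (Fin 2) k, rename Fin.castSucc F' = F := by
  refine exists_rename_eq_of_vars_subset_range F _ (Fin.castSucc_injective 2) ?_
  intro i hi
  obtain ⟨d, hd, hid⟩ := (mem_vars_iff_mem_support i).1 (Finset.mem_coe.1 hi)
  fin_cases i
  · exact ⟨0, rfl⟩
  · exact ⟨1, rfl⟩
  · exact absurd (hF d hd) (Finsupp.mem_support_iff.1 hid)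

end FreeBasis

/-! ### The short exact sequence -/

/-- Surjectivity of `φ`, with `X^a` and `Y^b` replaced by arbitrary `u, v ∈ k[X,Y]`;
`l` stands for `n - r`. -/
lemma phi_surjective {k : Type*} [Field k] (n q r l : ℕ) (hn : n ≠ 0) (hl : n = r + l)
    (F' u v : MvPolynomial (Fin 2) k)
    (xa yb z Fq : QuotG (X 2 ^ n - rename Fin.castSucc F' : MvP k))
    (hxa : xa = toQuot _ (Polynomial.C u)) (hyb : yb = toQuot _ (Polynomial.C v))
    (hz : z = toQuot _ Polynomial.X) (hFq : Fq = toQuot _ (Polynomial.C F'))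
    (hzF : z ^ n = Fq) (w : Fin 3 → QuotG (X 2 ^ n - rename Fin.castSucc F' : MvP k))
    (hw : isSyz xa yb (z ^ (n * q + r)) w) :
    ∃ fg : (Fin 3 → QuotG (X 2 ^ n - rename Fin.castSucc F' : MvP k)) ×
        (Fin 3 → QuotG (X 2 ^ n - rename Fin.castSucc F' : MvP k)),
      isSyz xa yb (Fq ^ q) fg.1 ∧ isSyz xa yb (Fq ^ (q + 1)) fg.2 ∧ phiMap n r z fg = w := by
  obtain ⟨p₀, hd₀, hp₀⟩ := exists_rep n hn F' (w 0)
  obtain ⟨p₁, hd₁, hp₁⟩ := exists_rep n hn F' (w 1)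
  obtain ⟨p₂, hd₂, hp₂⟩ := exists_rep n hn F' (w 2)
  obtain ⟨f₀, g₀, rfl, hf₀, hg₀⟩ := exists_split p₀ r l (by rwa [← hl])
  obtain ⟨f₁, g₁, rfl, hf₁, hg₁⟩ := exists_split p₁ r l (by rwa [← hl])
  -- The third component is split at `Z^l` instead, since `φ` multiplies `g₂` by `Z^(n-r)`.
  obtain ⟨g₂, f₂, rfl, hg₂, hf₂⟩ := exists_split p₂ l r (by rwa [add_comm, ← hl])
  have hnl : n - r = l := by omega
  have hzrl : z ^ r * z ^ l = Fq := by rw [← pow_add, ← hl, hzF]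
  have hzc : z ^ (n * q + r) = z ^ r * Fq ^ q := by rw [pow_add, pow_mul, hzF, mul_comm]
  have hf := degree_syz_lt l u v (F' ^ q) f₀ f₁ f₂ hf₀ hf₁ hf₂
  have hg := degree_syz_lt r u v (F' ^ (q + 1)) g₀ g₁ g₂ hg₀ hg₁ hg₂
  set P := f₀ * Polynomial.C u + f₁ * Polynomial.C v + f₂ * Polynomial.C (F' ^ q) with hP
  set Q := g₀ * Polynomial.C u + g₁ * Polynomial.C v + g₂ * Polynomial.C (F' ^ (q + 1)) with hQ
  have hdeg : (Polynomial.X ^ r * P + Q).degree < (n : WithBot ℕ) := by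
    rw [Polynomial.degree_lt_iff_coeff_zero] at *
    intro j hj
    rw [Polynomial.coeff_add, hg j (by omega), Polynomial.coeff_X_pow_mul', if_pos (by omega),
      hf (j - r) (by omega), add_zero]
  -- Over `S` this polynomial is the relation satisfied by `w`, since `Z^r Z^l = F`.
  have hzero : Polynomial.X ^ r * P + Q = 0 := by
    refine eq_zero_of_toQuot n hn F' _ hdeg ?_
    simp only [isSyz, ← hp₀, ← hp₁, ← hp₂, hzc] at hw
    simp only [hP, hQ, map_add, map_mul, map_pow, ← hxa, ← hyb, ← hz, ← hFq] at hw ⊢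
    rw [← hw, pow_succ]
    linear_combination (-toQuot _ g₂ * Fq ^ q) * hzrl
  obtain ⟨hP0, hQ0⟩ := eq_zero_of_X_pow_mul_add r P Q hg hzero
  refine ⟨(![toQuot _ f₀, toQuot _ f₁, toQuot _ f₂], ![toQuot _ g₀, toQuot _ g₁, toQuot _ g₂]),
    ?_, ?_, ?_⟩
  · have h := congrArg (toQuot (X 2 ^ n - rename Fin.castSucc F')) hP0
    simpa only [isSyz, Matrix.cons_val, hP, map_add, map_mul, map_pow, ← hxa, ← hyb, ← hFq,
      map_zero] using h
  · have h := congrArg (toQuot (X 2 ^ n - rename Fin.castSucc F')) hQ0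
    simpa only [isSyz, Matrix.cons_val, hQ, map_add, map_mul, map_pow, ← hxa, ← hyb, ← hFq,
      map_zero] using h
  · funext i
    fin_cases i
    · simp [phiMap, ← hp₀, hz]
    · simp [phiMap, ← hp₁, hz]
    · simp [phiMap, ← hp₂, hz, hnl, add_comm]

/-- The short exact sequence
`0 → Syz(X^a,Y^b,Z^{c+n-2r}) → Syz(X^a,Y^b,F^q) ⊕ Syz(X^a,Y^b,F^{q+1}) → Syz(X^a,Y^b,Z^c) → 0`
over `S = k[X,Y,Z]/(Z^n - F(X,Y))`: ψ and φ are well defined, ψ is injective, φ is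
surjective, and the image of ψ is the kernel of φ. -/
theorem stmt0 {k : Type*} [Field k] (n a b c q r : ℕ) (hn : 2 ≤ n) (ha : 1 ≤ a)
    (hb : 1 ≤ b) (hc : 1 ≤ c) (F : MvP k) (hF : F.IsHomogeneous n)
    (hFXY : ∀ d ∈ F.support, d 2 = 0) (hcr : c = n * q + r) (hr : r ≤ n - 1)
    (xa yb z Fq : QuotG (X 2 ^ n - F))
    (hxa : xa = qmk (X 2 ^ n - F) (X 0 ^ a)) (hyb : yb = qmk (X 2 ^ n - F) (X 1 ^ b))
    (hz : z = qmk (X 2 ^ n - F) (X 2)) (hFq : Fq = qmk (X 2 ^ n - F) F) :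
    (∀ h : Fin 3 → QuotG (X 2 ^ n - F), isSyz xa yb (z ^ (c + n - 2 * r)) h →
        isSyz xa yb (Fq ^ q) (psiMap n r z h).1 ∧
          isSyz xa yb (Fq ^ (q + 1)) (psiMap n r z h).2) ∧
    (∀ fg : (Fin 3 → QuotG (X 2 ^ n - F)) × (Fin 3 → QuotG (X 2 ^ n - F)),
        isSyz xa yb (Fq ^ q) fg.1 → isSyz xa yb (Fq ^ (q + 1)) fg.2 →
        isSyz xa yb (z ^ c) (phiMap n r z fg)) ∧
    (∀ h h' : Fin 3 → QuotG (X 2 ^ n - F), isSyz xa yb (z ^ (c + n - 2 * r)) h →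
        isSyz xa yb (z ^ (c + n - 2 * r)) h' → psiMap n r z h = psiMap n r z h' → h = h') ∧
    (∀ w : Fin 3 → QuotG (X 2 ^ n - F), isSyz xa yb (z ^ c) w →
        ∃ fg : (Fin 3 → QuotG (X 2 ^ n - F)) × (Fin 3 → QuotG (X 2 ^ n - F)),
          isSyz xa yb (Fq ^ q) fg.1 ∧ isSyz xa yb (Fq ^ (q + 1)) fg.2 ∧
            phiMap n r z fg = w) ∧
    (∀ fg : (Fin 3 → QuotG (X 2 ^ n - F)) × (Fin 3 → QuotG (X 2 ^ n - F)),
        isSyz xa yb (Fq ^ q) fg.1 → isSyz xa yb (Fq ^ (q + 1)) fg.2 →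
        (phiMap n r z fg = 0 ↔
          ∃ h : Fin 3 → QuotG (X 2 ^ n - F),
            isSyz xa yb (z ^ (c + n - 2 * r)) h ∧ psiMap n r z h = fg)) := by
  obtain ⟨F', rfl⟩ := exists_eq_rename F hFXY
  obtain ⟨l, hl⟩ : ∃ l, n = r + l := ⟨n - r, by omega⟩
  have hnl : n - r = l := by omega
  have hzF : z ^ n = Fq := by
    rw [hz, hFq, ← map_pow]
    exact Ideal.Quotient.eq.2 (Ideal.mem_span_singleton_self _)
  have hzrl : z ^ r * z ^ l = Fq := by rw [← pow_add, ← hl, hzF]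
  have hzc : z ^ c = z ^ r * Fq ^ q := by rw [hcr, pow_add, pow_mul, hzF, mul_comm]
  have hze : z ^ (c + n - 2 * r) = z ^ l * Fq ^ q := by
    have : c + n - 2 * r = n * q + l := by omega
    rw [this, pow_add, pow_mul, hzF, mul_comm]
  refine ⟨?_, ?_, ?_, ?_, ?_⟩
  · intro h hh
    simp only [isSyz, psiMap, hze, hnl, Matrix.cons_val] at hh ⊢
    constructor
    · linear_combination hh
    · linear_combination (-z ^ r) * hh + h 2 * Fq ^ q * hzrl
  · intro fg hf hg
    simp only [isSyz, phiMap, hzc, hnl, Matrix.cons_val] at hf hg ⊢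
    linear_combination z ^ r * hf + hg + fg.2 2 * Fq ^ q * hzrl
  · intro h h' _ _ heq
    simp only [psiMap, Prod.mk.injEq] at heq
    have e0 := congrFun heq.1 0
    have e1 := congrFun heq.1 1
    have e2 := congrFun heq.2 2
    simp only [Matrix.cons_val, neg_inj] at e0 e1 e2
    funext i
    fin_cases i
    exacts [e0, e1, e2]
  · intro w hw
    refine phi_surjective n q r l (by omega) hl F' (X 0 ^ a) (X 1 ^ b) xa yb z Fq ?_ ?_ ?_ ?_
      hzF w (hcr ▸ hw)
    · simp [hxa, toQuot]
    · simp [hyb, toQuot]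
    · simp [hz, toQuot]
    · simp [hFq, toQuot]
  · rintro ⟨f, g⟩ hf hg
    constructor
    · intro h0
      have e0 := congrFun h0 0
      have e1 := congrFun h0 1
      have e2 := congrFun h0 2
      simp only [phiMap, hnl, Matrix.cons_val, Pi.zero_apply] at e0 e1 e2
      -- The components of `ψ(h)` not involving powers of `Z` dictate the preimage `h`.
      refine ⟨![f 0, f 1, -g 2], ?_, ?_⟩
      · simp only [isSyz, hze, Matrix.cons_val] at hf ⊢
        linear_combination hf - Fq ^ q * e2
      · refine Prod.ext ?_ ?_ <;> funext i <;> fin_cases i <;>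
          simp only [psiMap, hnl, Matrix.cons_val, Fin.zero_eta, Fin.mk_one, Fin.reduceFinMk]
        · linear_combination -e2
        · linear_combination -e0
        · linear_combination -e1
        · ring
    · rintro ⟨h, _, heq⟩
      rw [← heq]
      funext i
      fin_cases i <;> simp [phiMap, psiMap, ← mul_add]
end
end

section
/- Let k be a field, n ≥ 2, F ∈ k[X,Y] homogeneous of degree n, S := k[X,Y,Z]/(Z^n − F(X,Y)), and a, b ≥ 1 integers. For an integer l ≥ 0 let h_l(m) denote the k-dimension of the homogeneous component of degree m of Syz_S(X^a, Y^b, Z^l), i.e. of the space of syzygies (g₁,g₂,g₃) with g₁, g₂, g₃ homogeneous (or zero) of degrees m−a, m−b, m−l respectively. Let c ≥ 1 and write c = nq + r with q ≥ 0 and 0 ≤ r ≤ n−1. Then in the formal power series ring ℤ⟦t⟧ one has (1 − t^n)·Σ_{m≥0} h_c(m)·t^m = (t^r − t^n)·Σ_{m≥0} h_{c−r}(m)·t^m + (1 − t^r)·Σ_{m≥0} h_{c+n−r}(m)·t^m. -/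
/-!
As a module over `A = k[X,Y]`, the ring `S` is free with basis `1, Z, …, Z^(n-1)` (`coord_unique`,
`coord_exists`), and since `Z^n = F ∈ A` this is a grading by `ℤ/n`. Syzygies of `X^a, Y^b, Z^c`
respect it. Write `c = nq + r`. In the component of a relation `g₁X^a + g₂Y^b + g₃Z^c = 0` along
`Z^j` one has `g₁ = uZ^j`, `g₂ = vZ^j` and `g₃ = wZ^i` with `i ≡ j - r` modulo `n`, and
`Z^i Z^c = Z^j F^p`, where `p = q` if `j ≥ r` and `p = q + 1` if `j < r`. So each `j` contributes
one syzygy `(u, v, w)` of `X^a, Y^b, F^p` over `A`, in degree lowered by `j` (`finrank_syzComp`,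
`hfun_eq_sum`).

With `D_p` the Hilbert series of `Syz_A(X^a, Y^b, F^p)`, where `F^p` has degree `np`, this gives
`(1 - t) H_c = (t^r - t^n) D_q + (1 - t^r) D_{q+1}` (`mk_hfun`). The case `r = 0` gives
`(1 - t) H_{nq} = (1 - t^n) D_q`, and likewise for `q + 1`; eliminating `D_q` and `D_{q+1}`
is the claim.
-/

open MvPolynomial

set_option synthInstance.maxHeartbeats 1000000
set_option maxHeartbeats 1000000

noncomputable section

/-- `x` is the residue class of a homogeneous polynomial of degree `d`. -/
def IsHomog {k : Type*} [Field k] {G : MvP k} (x : QuotG G) (d : ℕ) : Prop :=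
  ∃ P : MvP k, P.IsHomogeneous d ∧ qmk G P = x

/-- `x` is zero, or the residue class of a homogeneous polynomial of (integer) degree `d`. -/
def IsHomogZ {k : Type*} [Field k] {G : MvP k} (x : QuotG G) (d : ℤ) : Prop :=
  x = 0 ∨ ∃ d' : ℕ, (d' : ℤ) = d ∧ IsHomog x d'

lemma IsHomogZ.add {k : Type*} [Field k] {G : MvP k} {x y : QuotG G} {d : ℤ}
    (hx : IsHomogZ x d) (hy : IsHomogZ y d) : IsHomogZ (x + y) d := by
  rcases hx with rfl | ⟨d1, hd1, P, hP, hPx⟩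
  · simpa using hy
  rcases hy with rfl | ⟨d2, hd2, Q, hQ, hQy⟩
  · exact Or.inr ⟨d1, hd1, P, hP, by simpa using hPx⟩
  have hdd : d2 = d1 := by omega
  subst hdd
  exact Or.inr ⟨d2, hd1, P + Q, hP.add hQ, by simp [map_add, hPx, hQy]⟩

lemma IsHomogZ.smul {k : Type*} [Field k] {G : MvP k} {x : QuotG G} {d : ℤ}
    (c : k) (hx : IsHomogZ x d) : IsHomogZ (c • x) d := by
  rcases hx with rfl | ⟨d1, hd1, P, hP, hPx⟩
  · exact Or.inl (smul_zero c)
  refine Or.inr ⟨d1, hd1, c • P, ?_, ?_⟩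
  · simpa [Algebra.smul_def] using hP.C_mul c
  · have : qmk G (c • P) = c • qmk G P := by
      rw [Algebra.smul_def (A := MvP k), Algebra.smul_def (A := QuotG G), map_mul,
        IsScalarTower.algebraMap_apply k (MvP k) (QuotG G)]
      rfl
    rw [this, hPx]

/-- The degree-`m` homogeneous component (a `k`-vector space) of the syzygy module of
`f 0, f 1, f 2`, where `f i` is homogeneous of degree `deg i`: syzygies `(g₁,g₂,g₃)` with
`gᵢ` homogeneous of degree `m - deg i` or zero. -/
def syzComp {k : Type*} [Field k] (G : MvP k) (f : Fin 3 → QuotG G) (deg : Fin 3 → ℤ)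
    (m : ℤ) : Submodule k (Fin 3 → QuotG G) where
  carrier := {g | (∑ i, g i * f i) = 0 ∧ ∀ i, IsHomogZ (g i) (m - deg i)}
  zero_mem' := ⟨by simp, fun i => Or.inl rfl⟩
  add_mem' := by
    rintro a b ⟨ha1, ha2⟩ ⟨hb1, hb2⟩
    refine ⟨?_, fun i => (ha2 i).add (hb2 i)⟩
    simp only [Pi.add_apply, add_mul, Finset.sum_add_distrib, ha1, hb1, add_zero]
  smul_mem' := by
    rintro c a ⟨ha1, ha2⟩
    refine ⟨?_, fun i => (ha2 i).smul c⟩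
    simp only [Pi.smul_apply, smul_mul_assoc, ← Finset.smul_sum, ha1, smul_zero]

/-- `hfun G a b l m` is the `k`-dimension of the degree-`m` homogeneous component of
`Syz_S(X^a, Y^b, Z^l)` where `S = k[X,Y,Z]/(G)`. -/
def hfun {k : Type*} [Field k] (G : MvP k) (a b l : ℕ) (m : ℕ) : ℕ :=
  Module.finrank k
    (syzComp G ![qmk G (X 0 ^ a), qmk G (X 1 ^ b), qmk G (X 2 ^ l)]
      ![(a : ℤ), (b : ℤ), (l : ℤ)] (m : ℤ))

/-! ### Coordinates with respect to the powers of `Z` -/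

/-- The space of polynomials in `X, Y` alone that are homogeneous of (integer) degree `d`. -/
def Vsp (k : Type*) [Field k] (d : ℤ) : Submodule k (MvP k) :=
  restrictSupport k {e | e 2 = 0 ∧ (e.degree : ℤ) = d}

lemma Vsp_degreeOf {k : Type*} [Field k] {d : ℤ} {P : MvP k} (h : P ∈ Vsp k d) :
    degreeOf 2 P = 0 := by
  rw [← Nat.le_zero, degreeOf_le_iff]
  intro e he
  exact (h he).1.le

lemma mem_Vsp {k : Type*} [Field k] {d : ℤ} {N : ℕ} {P : MvP k} (h0 : degreeOf 2 P = 0)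
    (h : P.IsHomogeneous N) (hd : (N : ℤ) = d) : P ∈ Vsp k d := by
  intro e he
  refine ⟨Nat.le_zero.1 (degreeOf_le_iff.1 h0.le e he), ?_⟩
  rw [← hd, Nat.cast_inj, Finsupp.degree_eq_weight_one]
  exact h (mem_support_iff.1 he)

lemma Vsp_neg {k : Type*} [Field k] {d : ℤ} (hd : d < 0) {P : MvP k} (h : P ∈ Vsp k d) :
    P = 0 := by
  by_contra hP
  obtain ⟨e, he⟩ := support_nonempty.2 hP
  have := (h he).2
  omega

lemma Vsp_homog {k : Type*} [Field k] {d : ℕ} {P : MvP k} (h : P ∈ Vsp k d) :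
    P.IsHomogeneous d := by
  intro e he
  have := (h (mem_support_iff.2 he)).2
  rw [Nat.cast_inj, Finsupp.degree_eq_weight_one] at this
  exact this

instance Vsp_finite {k : Type*} [Field k] (d : ℤ) : Module.Finite k (Vsp k d) := by
  have hfin : Finite {e : Fin 3 →₀ ℕ | e 2 = 0 ∧ (e.degree : ℤ) = d} := by
    refine ((Finsupp.finite_of_degree_le (σ := Fin 3) d.toNat).subset ?_).to_subtype
    rintro e ⟨-, he⟩
    simp only [Set.mem_ofPred_eq]
    omega
  exact Module.Finite.of_basis (basisRestrictSupport k _)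

/-- Uniqueness of coordinates in the `k[X,Y]`-basis `1, Z, …, Z^(n-1)` of `S`. -/
lemma coord_unique {k : Type*} [Field k] {n : ℕ} {F : MvP k} (hn : 0 < n)
    (hF : degreeOf 2 F = 0) (P : Fin n → MvP k) (hP : ∀ j, degreeOf 2 (P j) = 0)
    (h : qmk (X 2 ^ n - F) (∑ j, P j * X 2 ^ (j : ℕ)) = 0) (j : Fin n) : P j = 0 := by
  -- A nonzero multiple of `Z^n - F` has `Z`-degree at least `n`, but this sum has less.
  have hT : ∑ j, P j * X 2 ^ (j : ℕ) = 0 := by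
    by_contra hT
    obtain ⟨Q, hQ⟩ := Ideal.mem_span_singleton.1 (Ideal.Quotient.eq_zero_iff_mem.1 h)
    have h1 : degreeOf 2 (∑ j, P j * X 2 ^ (j : ℕ)) ≤ n - 1 := by
      refine (degreeOf_sum_le _ _ _).trans (Finset.sup_le fun j _ => ?_)
      refine (degreeOf_mul_le _ _ _).trans ?_
      rw [hP, degreeOf_X_self_pow]
      omega
    have h2 : degreeOf 2 (X 2 ^ n - F) = n := by
      rw [sub_eq_add_neg, degreeOf_add_eq_of_degreeOf_lt, degreeOf_X_self_pow]
      rw [degreeOf_neg, hF, degreeOf_X_self_pow]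
      exact hn
    rw [hQ] at hT h1
    rw [degreeOf_mul_eq (left_ne_zero_of_mul hT) (right_ne_zero_of_mul hT), h2] at h1
    omega
  ext e
  rw [coeff_zero]
  by_cases he : e 2 = 0
  · have h3 := congrArg (coeff (e + Finsupp.single 2 (j : ℕ))) hT
    rw [coeff_sum, coeff_zero, Finset.sum_eq_single j] at h3
    · rwa [X_pow_eq_monomial, coeff_mul_monomial, mul_one] at h3
    · intro i _ hij
      rw [X_pow_eq_monomial, coeff_mul_monomial', mul_one]
      split_ifs with hle
      · have h4 := hle 2
        by_contra hne
        have h5 := degreeOf_le_iff.1 (hP i).le _ (mem_support_iff.2 hne)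
        simp [he] at h4 h5
        omega
      · rfl
    · simp
  · by_contra hne
    exact he (Nat.le_zero.1 (degreeOf_le_iff.1 (hP j).le e (mem_support_iff.2 hne)))

/-- Uniqueness of coordinates in the same basis with its elements permuted. -/
lemma coord_unique_perm {k : Type*} [Field k] {n : ℕ} {F : MvP k} (hn : 0 < n)
    (hF : degreeOf 2 F = 0) (σ : Equiv.Perm (Fin n)) (P : Fin n → MvP k)
    (hP : ∀ j, degreeOf 2 (P j) = 0)
    (h : ∑ j, qmk (X 2 ^ n - F) (P j * X 2 ^ (σ j : ℕ)) = 0) (j : Fin n) : P j = 0 := by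
  have := coord_unique hn hF (fun j => P (σ.symm j)) (fun j => hP _) (by
    rw [map_sum, ← h, ← Equiv.sum_comp σ]
    simp only [Equiv.symm_apply_apply]) (σ j)
  simpa only [Equiv.symm_apply_apply] using this

lemma coord_homog {k : Type*} [Field k] {n : ℕ} {G : MvP k} {d : ℤ} (P : Fin n → MvP k)
    (e : Fin n → ℕ) (hP : ∀ j, P j ∈ Vsp k (d - e j)) :
    IsHomogZ (∑ j, qmk G (P j * X 2 ^ e j)) d := by
  refine Finset.sum_induction _ (fun x => IsHomogZ x d) (fun _ _ => IsHomogZ.add) (Or.inl rfl) ?_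
  intro j _
  by_cases hd : d - e j < 0
  · left
    rw [Vsp_neg hd (hP j), zero_mul, map_zero]
  · obtain ⟨N, hN⟩ := Int.eq_ofNat_of_zero_le (not_lt.1 hd)
    refine Or.inr ⟨N + e j, by push_cast; omega, _, ?_, rfl⟩
    have := hP j
    rw [hN] at this
    exact (Vsp_homog this).mul (isHomogeneous_X_pow _ _)

/-- Existence of homogeneous coordinates: every homogeneous element of `S` is a combination of
`1, Z, …, Z^(n-1)` with homogeneous coefficients from `k[X,Y]`. -/
lemma coord_exists {k : Type*} [Field k] {n : ℕ} {F : MvP k} (hn : 0 < n)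
    (hF0 : degreeOf 2 F = 0) (hF : F.IsHomogeneous n) {d : ℤ} {x : QuotG (X 2 ^ n - F)}
    (hx : IsHomogZ x d) :
    ∃ P : Fin n → MvP k, (∀ j : Fin n, P j ∈ Vsp k (d - (j : ℕ))) ∧
      ∑ j : Fin n, qmk (X 2 ^ n - F) (P j * X 2 ^ (j : ℕ)) = x := by
  rcases hx with rfl | ⟨N, rfl, Q, hQ, rfl⟩
  · exact ⟨0, fun j => zero_mem _, by simp⟩
  have hZ : qmk (X 2 ^ n - F) (X 2) ^ n = qmk (X 2 ^ n - F) F := by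
    rw [← map_pow, ← sub_eq_zero, ← map_sub]
    exact Ideal.Quotient.eq_zero_iff_mem.2 (Ideal.mem_span_singleton_self _)
  -- The elements with such coordinates are closed under sums, so monomials suffice.
  rw [Q.as_sum, map_sum]
  refine Finset.sum_induction _ (fun x => ∃ P : Fin n → MvP k,
    (∀ j : Fin n, P j ∈ Vsp k ((N : ℤ) - (j : ℕ))) ∧
      ∑ j : Fin n, qmk (X 2 ^ n - F) (P j * X 2 ^ (j : ℕ)) = x) ?_ ?_ ?_
  · rintro x y ⟨P, hP, rfl⟩ ⟨P', hP', rfl⟩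
    refine ⟨P + P', fun j => add_mem (hP j) (hP' j), ?_⟩
    rw [← Finset.sum_add_distrib]
    exact Finset.sum_congr rfl fun j _ => by rw [Pi.add_apply, add_mul, map_add]
  · exact ⟨0, fun j => zero_mem _, by simp⟩
  · intro e he
    have hdeg : e 0 + e 1 + e 2 = N := by
      have := hQ (mem_support_iff.1 he)
      change Finsupp.weight (fun _ => 1) e = N at this
      rwa [← Finsupp.degree_eq_weight_one, Finsupp.degree_eq_sum, Fin.sum_univ_three] at this
    set j : Fin n := ⟨e 2 % n, Nat.mod_lt _ hn⟩ with hj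
    -- `X^α Y^β Z^γ = X^α Y^β F^(γ / n) Z^(γ % n)` in `S`.
    set M : MvP k := C (coeff e Q) * (X 0 ^ e 0 * X 1 ^ e 1 * F ^ (e 2 / n)) with hM
    have hMh : M.IsHomogeneous (e 0 + e 1 + n * (e 2 / n)) :=
      (((isHomogeneous_X_pow _ _).mul (isHomogeneous_X_pow _ _)).mul (hF.pow _)).C_mul _
    have hM0 : degreeOf 2 M = 0 := by
      have h0 : degreeOf (2 : Fin 3) ((X 0 : MvP k) ^ e 0) = 0 :=
        degreeOf_X_pow_of_ne _ (by decide)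
      have h1 : degreeOf (2 : Fin 3) ((X 1 : MvP k) ^ e 1) = 0 :=
        degreeOf_X_pow_of_ne _ (by decide)
      have h2 := degreeOf_pow_le 2 F (e 2 / n)
      have h3 := degreeOf_mul_le 2 (X 0 ^ e 0 * X 1 ^ e 1) (F ^ (e 2 / n))
      have h4 := degreeOf_mul_le 2 (X 0 ^ e 0 : MvP k) (X 1 ^ e 1)
      have h5 := degreeOf_C_mul_le (X 0 ^ e 0 * X 1 ^ e 1 * F ^ (e 2 / n)) 2 (coeff e Q)
      rw [hF0] at h2
      rw [hM]
      omega
    have hdm := Nat.mod_add_div (e 2) n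
    refine ⟨Pi.single j M, fun i => ?_, ?_⟩
    · by_cases hij : i = j
      · subst hij
        rw [Pi.single_eq_same]
        refine mem_Vsp hM0 hMh ?_
        simp only [hj]
        omega
      · rw [Pi.single_eq_of_ne hij]
        exact zero_mem _
    · rw [Finset.sum_eq_single j]
      · rw [Pi.single_eq_same, monomial_eq, Finsupp.prod_fintype _ _ (by simp),
          Fin.prod_univ_three]
        simp only [hM, hj, map_mul, map_pow]
        conv_rhs => rw [← hdm, pow_add, pow_mul, hZ]
        ring
      · intro i _ hij
        rw [Pi.single_eq_of_ne hij, zero_mul, map_zero]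
      · simp

/-! ### Decomposition of the syzygies -/

/-- The degree-`d` component of `Syz(f 0, f 1, f 2)` over the subring `k[X,Y]`, where `f i` is
given degree `δ i`. -/
def asyz {k : Type*} [Field k] (f : Fin 3 → MvP k) (δ : Fin 3 → ℤ) (d : ℤ) :
    Submodule k (∀ i, Vsp k (d - δ i)) :=
  LinearMap.ker (∑ i, LinearMap.mulRight k (f i) ∘ₗ (Vsp k (d - δ i)).subtype ∘ₗ
    LinearMap.proj i)

/-- Stated as an instance because the search does not identify the additive structure of the
product `∀ i, Vsp k _` with the one underlying its group structure. -/
instance asyz_free {k : Type*} [Field k] (f : Fin 3 → MvP k) (δ : Fin 3 → ℤ) (d : ℤ) :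
    Module.Free k (asyz f δ d) :=
  @Module.Free.of_divisionRing k (asyz f δ d) _ (Submodule.addCommGroup _) (Submodule.module _)

lemma mem_asyz {k : Type*} [Field k] {f : Fin 3 → MvP k} {δ : Fin 3 → ℤ} {d : ℤ}
    {g : ∀ i, Vsp k (d - δ i)} : g ∈ asyz f δ d ↔ ∑ i, (g i : MvP k) * f i = 0 := by
  simp [asyz, LinearMap.sum_apply]

/-- Assembles syzygies over `k[X,Y]`, one for each `j : Fin n`, into a triple of elements of `S`;
the `j`-th syzygy contributes to the `i`-th entry with the power `Z ^ τ i j`. -/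
def assemble {k : Type*} [Field k] {n : ℕ} (G : MvP k) (f' : Fin n → Fin 3 → MvP k)
    (δ' : Fin n → Fin 3 → ℤ) (d' : Fin n → ℤ) (τ : Fin 3 → Equiv.Perm (Fin n)) :
    (∀ j, asyz (f' j) (δ' j) (d' j)) →ₗ[k] (Fin 3 → QuotG G) where
  toFun x i := ∑ j, qmk G (((x j).1 i : MvP k) * X 2 ^ (τ i j : ℕ))
  map_add' x y := by
    ext i
    simp [add_mul, Finset.sum_add_distrib]
  map_smul' c x := by
    ext i
    simp only [Pi.smul_apply, RingHom.id_apply, Finset.smul_sum]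
    refine Finset.sum_congr rfl fun j _ => ?_
    rw [Submodule.coe_smul, Pi.smul_apply, Submodule.coe_smul, smul_mul_assoc]
    rfl

/-- Splitting the syzygies over `S` by the `ℤ/n`-grading: if `Z ^ τ i j * f i = Z ^ j * f' j i`
in `S`, then a homogeneous syzygy of `f` over `S` amounts to a homogeneous syzygy of `f' j` over
`k[X,Y]` for each `j : Fin n`: the component of the relation along the basis element `Z ^ j`. -/
lemma finrank_syzComp {k : Type*} [Field k] {n : ℕ} {F : MvP k} (hn : 0 < n)
    (hF0 : degreeOf 2 F = 0) (hF : F.IsHomogeneous n) (f : Fin 3 → QuotG (X 2 ^ n - F))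
    (δ : Fin 3 → ℤ) (f' : Fin n → Fin 3 → MvP k) (δ' : Fin n → Fin 3 → ℤ)
    (τ : Fin 3 → Equiv.Perm (Fin n)) (hf' : ∀ j i, degreeOf 2 (f' j i) = 0)
    (hτ : ∀ i j, qmk (X 2 ^ n - F) (X 2 ^ (τ i j : ℕ)) * f i =
      qmk (X 2 ^ n - F) (X 2 ^ (j : ℕ) * f' j i))
    (hδ : ∀ i j, δ i + ((τ i j : ℕ) : ℤ) = (j : ℕ) + δ' j i) (m : ℤ) :
    Module.finrank k (syzComp (X 2 ^ n - F) f δ m) =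
      ∑ j : Fin n, Module.finrank k (asyz (f' j) (δ' j) (m - (j : ℕ))) := by
  set Ψ := assemble (X 2 ^ n - F) f' δ' (fun j => m - (j : ℕ)) τ with hΨ
  -- The relation evaluated at an assembled triple, sorted by powers of `Z`.
  have key : ∀ P : Fin n → Fin 3 → MvP k,
      ∑ i, (∑ j, qmk (X 2 ^ n - F) (P j i * X 2 ^ (τ i j : ℕ))) * f i =
        qmk (X 2 ^ n - F) (∑ j : Fin n, (∑ i, P j i * f' j i) * X 2 ^ (j : ℕ)) := by
    intro P
    simp only [map_sum, Finset.sum_mul]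
    rw [Finset.sum_comm]
    refine Finset.sum_congr rfl fun j _ => Finset.sum_congr rfl fun i _ => ?_
    rw [map_mul, mul_assoc, hτ, ← map_mul]
    congr 1
    ring
  have hinj : Function.Injective Ψ := by
    intro x y hxy
    ext j i : 4
    have hxi : ∑ j, qmk (X 2 ^ n - F) (((x j).1 i : MvP k) * X 2 ^ (τ i j : ℕ)) =
        ∑ j, qmk (X 2 ^ n - F) (((y j).1 i : MvP k) * X 2 ^ (τ i j : ℕ)) :=
      congrFun hxy i
    refine sub_eq_zero.1 (coord_unique_perm hn hF0 (τ i)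
      (fun j => ((x j).1 i - (y j).1 i : MvP k))
      (fun j => Vsp_degreeOf (sub_mem ((x j).1 i).2 ((y j).1 i).2)) ?_ j)
    simp only [sub_mul, map_sub, Finset.sum_sub_distrib]
    rw [hxi, sub_self]
  have hrange : LinearMap.range Ψ = syzComp (X 2 ^ n - F) f δ m := by
    ext g
    constructor
    · rintro ⟨x, rfl⟩
      refine ⟨?_, fun i => ?_⟩
      · refine (key (fun j i => ((x j).1 i : MvP k))).trans ?_
        rw [Finset.sum_eq_zero, map_zero]
        intro j _
        rw [mem_asyz.1 (x j).2, zero_mul]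
      · refine coord_homog (fun j => ((x j).1 i : MvP k)) (fun j => (τ i j : ℕ)) fun j => ?_
        have h1 := ((x j).1 i).2
        have h2 := hδ i j
        convert h1 using 1
        congr 1
        omega
    · rintro ⟨hg, hgd⟩
      choose P hP hPg using fun i => coord_exists hn hF0 hF (hgd i)
      have hPτ : ∀ i, ∑ j, qmk (X 2 ^ n - F) (P i (τ i j) * X 2 ^ (τ i j : ℕ)) = g i := by
        intro i
        rw [← hPg i]
        exact Equiv.sum_comp (τ i) fun j => qmk (X 2 ^ n - F) (P i j * X 2 ^ (j : ℕ))
      have hV : ∀ (j : Fin n) (i : Fin 3), P i (τ i j) ∈ Vsp k (m - (j : ℕ) - δ' j i) := by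
        intro j i
        have h2 := hδ i j
        convert hP i (τ i j) using 1
        congr 1
        omega
      have h0 := key (fun j i => P i (τ i j))
      simp only [hPτ] at h0
      rw [hg] at h0
      have h1 := coord_unique hn hF0 _ (fun j => by
        rw [← Nat.le_zero]
        refine (degreeOf_sum_le _ _ _).trans (Finset.sup_le fun i _ => ?_)
        refine (degreeOf_mul_le _ _ _).trans ?_
        rw [hf', Vsp_degreeOf (hV j i)]) h0.symm
      exact ⟨fun j => ⟨fun i => ⟨_, hV j i⟩, mem_asyz.2 (h1 j)⟩, funext hPτ⟩
  rw [← hrange, LinearMap.finrank_range_of_inj hinj, Module.finrank_pi_fintype]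

/-! ### Hilbert functions and series -/

/-- The Hilbert function of `Syz(X^a, Y^b, F^p)` over `k[X,Y]`. -/
def afun {k : Type*} [Field k] (F : MvP k) (n a b p : ℕ) (d : ℤ) : ℕ :=
  Module.finrank k (asyz ![X 0 ^ a, X 1 ^ b, F ^ p] ![(a : ℤ), (b : ℤ), ((n * p : ℕ) : ℤ)] d)

lemma afun_neg {k : Type*} [Field k] (F : MvP k) (n a b p : ℕ) {d : ℤ} (hd : d < 0) :
    afun F n a b p d = 0 := by
  refine @Module.finrank_zero_of_subsingleton _ _ _ _ _ _ ⟨fun x y => ?_⟩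
  ext i : 3
  have h : d - (![(a : ℤ), (b : ℤ), ((n * p : ℕ) : ℤ)] : Fin 3 → ℤ) i < 0 := by
    have h0 : (0 : ℤ) ≤ (![(a : ℤ), (b : ℤ), ((n * p : ℕ) : ℤ)] : Fin 3 → ℤ) i := by
      fin_cases i <;> exact Int.natCast_nonneg _
    omega
  rw [Vsp_neg h (x.1 i).2, Vsp_neg h (y.1 i).2]

/-- With `c = n*q + r`, the `Z ^ j`-part of a syzygy of `X^a, Y^b, Z^c` over `S` is a syzygy of
`X^a, Y^b, F^(q+1)` over `k[X,Y]` for `j < r`, and of `X^a, Y^b, F^q` for `j ≥ r`. -/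
lemma hfun_eq_sum {k : Type*} [Field k] {n : ℕ} {F : MvP k} (hn : 0 < n)
    (hF0 : degreeOf 2 F = 0) (hF : F.IsHomogeneous n) (a b q r : ℕ) (hr : r < n) (m : ℕ) :
    hfun (X 2 ^ n - F) a b (n * q + r) m =
      ∑ j ∈ Finset.range n, afun F n a b (if j < r then q + 1 else q) ((m : ℤ) - (j : ℕ)) := by
  have : NeZero n := ⟨hn.ne'⟩
  have hZ : qmk (X 2 ^ n - F) (X 2 ^ n) = qmk (X 2 ^ n - F) F := by
    rw [← sub_eq_zero, ← map_sub]
    exact Ideal.Quotient.eq_zero_iff_mem.2 (Ideal.mem_span_singleton_self _)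
  set σ : Equiv.Perm (Fin n) := Equiv.subRight ⟨r, hr⟩ with hσ
  -- `Z^(n*q+r) * Z^(σ j) = Z^j * (Z^n)^p`, with `p = q + 1` when subtracting `r` wraps around.
  have hσv : ∀ j : Fin n,
      n * q + r + (σ j : ℕ) = j + n * (if (j : ℕ) < r then q + 1 else q) := by
    intro j
    have hj := j.2
    rw [hσ, Equiv.subRight_apply, Fin.val_sub]
    change n * q + r + (n - r + (j : ℕ)) % n = _
    split_ifs with h
    · rw [Nat.mod_eq_of_lt (by omega), mul_add]
      omega
    · rw [Nat.mod_eq_sub_mod (by omega), Nat.mod_eq_of_lt (by omega)]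
      omega
  have h0 : degreeOf (2 : Fin 3) ((X 0 : MvP k) ^ a) = 0 := degreeOf_X_pow_of_ne _ (by decide)
  have h1 : degreeOf (2 : Fin 3) ((X 1 : MvP k) ^ b) = 0 := degreeOf_X_pow_of_ne _ (by decide)
  have h2 : ∀ p, degreeOf 2 (F ^ p) = 0 := fun p => by
    have := degreeOf_pow_le 2 F p
    rw [hF0] at this
    omega
  rw [Finset.sum_range]
  refine finrank_syzComp hn hF0 hF _ _
    (fun j => ![X 0 ^ a, X 1 ^ b, F ^ (if (j : ℕ) < r then q + 1 else q)])
    (fun j => ![(a : ℤ), (b : ℤ), ((n * (if (j : ℕ) < r then q + 1 else q) : ℕ) : ℤ)])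
    ![1, 1, σ] ?_ ?_ ?_ m
  · intro j i
    fin_cases i
    · exact h0
    · exact h1
    · exact h2 _
  · intro i j
    fin_cases i
    · exact (map_mul _ _ _).symm
    · exact (map_mul _ _ _).symm
    · change qmk (X 2 ^ n - F) (X 2 ^ (σ j : ℕ)) * qmk (X 2 ^ n - F) (X 2 ^ (n * q + r)) =
        qmk (X 2 ^ n - F) (X 2 ^ (j : ℕ) * F ^ (if (j : ℕ) < r then q + 1 else q))
      rw [← map_mul, ← pow_add, add_comm, hσv, pow_add, pow_mul, map_mul, map_mul, map_pow _ F,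
        map_pow _ (X 2 ^ n), hZ]
  · intro i j
    fin_cases i
    · exact add_comm _ _
    · exact add_comm _ _
    · change ((n * q + r : ℕ) : ℤ) + ((σ j : ℕ) : ℤ) =
        (j : ℕ) + ((n * (if (j : ℕ) < r then q + 1 else q) : ℕ) : ℤ)
      rw [← Nat.cast_add, ← Nat.cast_add, hσv]

open PowerSeries in
/-- With `D_p` the Hilbert series of `Syz(X^a, Y^b, F^p)` over `k[X,Y]`, this reads
`H_{nq+r} = (t^r + ⋯ + t^(n-1)) D_q + (1 + ⋯ + t^(r-1)) D_{q+1}`. -/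
lemma mk_hfun {k : Type*} [Field k] {n : ℕ} {F : MvP k} (hn : 0 < n)
    (hF0 : degreeOf 2 F = 0) (hF : F.IsHomogeneous n) (a b q r : ℕ) (hr : r < n) :
    PowerSeries.mk (fun m => (hfun (MvPolynomial.X 2 ^ n - F) a b (n * q + r) m : ℤ)) =
      (∑ j ∈ Finset.range n, PowerSeries.X ^ j - ∑ j ∈ Finset.range r, PowerSeries.X ^ j) *
          PowerSeries.mk (fun m => (afun F n a b q m : ℤ)) +
        (∑ j ∈ Finset.range r, PowerSeries.X ^ j) *
          PowerSeries.mk (fun m => (afun F n a b (q + 1) m : ℤ)) := by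
  have h : PowerSeries.mk
      (fun m => (hfun (MvPolynomial.X 2 ^ n - F) a b (n * q + r) m : ℤ)) =
      ∑ j ∈ Finset.range n, PowerSeries.X ^ j *
        PowerSeries.mk (fun m => (afun F n a b (if j < r then q + 1 else q) m : ℤ)) := by
    ext m
    rw [coeff_mk, hfun_eq_sum hn hF0 hF a b q r hr, map_sum, Nat.cast_sum]
    refine Finset.sum_congr rfl fun j _ => ?_
    rw [coeff_X_pow_mul']
    split_ifs with h1 h2 h2
    · rw [coeff_mk, Nat.cast_sub h2]
    · rw [afun_neg _ _ _ _ _ (by omega), Nat.cast_zero]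
    · rw [coeff_mk, Nat.cast_sub h2]
    · rw [afun_neg _ _ _ _ _ (by omega), Nat.cast_zero]
  rw [h, ← Finset.sum_range_add_sum_Ico _ hr.le, ← Finset.sum_range_add_sum_Ico _ hr.le,
    add_sub_cancel_left, add_comm, Finset.sum_mul, Finset.sum_mul]
  congr 1
  · refine Finset.sum_congr rfl fun j hj => ?_
    rw [if_neg (not_lt.2 (Finset.mem_Ico.1 hj).1)]
  · refine Finset.sum_congr rfl fun j hj => ?_
    rw [if_pos (Finset.mem_range.1 hj)]

/-- The Hilbert series relation
`(1 - t^n)·H_c(t) = (t^r - t^n)·H_{c-r}(t) + (1 - t^r)·H_{c+n-r}(t)`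
for the syzygy modules `Syz_S(X^a, Y^b, Z^l)` over `S = k[X,Y,Z]/(Z^n - F(X,Y))`. -/
theorem stmt1 {k : Type*} [Field k] (n a b c q r : ℕ) (hn : 2 ≤ n) (ha : 1 ≤ a)
    (hb : 1 ≤ b) (hc : 1 ≤ c) (F : MvP k) (hF : F.IsHomogeneous n)
    (hFXY : ∀ d ∈ F.support, d 2 = 0) (hcr : c = n * q + r) (hr : r ≤ n - 1) :
    (1 - (PowerSeries.X : PowerSeries ℤ) ^ n) *
        PowerSeries.mk (fun m => (hfun (X 2 ^ n - F) a b c m : ℤ)) =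
      (PowerSeries.X ^ r - PowerSeries.X ^ n) *
          PowerSeries.mk (fun m => (hfun (X 2 ^ n - F) a b (c - r) m : ℤ)) +
        (1 - PowerSeries.X ^ r) *
          PowerSeries.mk (fun m => (hfun (X 2 ^ n - F) a b (c + n - r) m : ℤ)) := by
  have hn0 : 0 < n := by omega
  have hF0 : degreeOf 2 F = 0 := by
    rw [← Nat.le_zero, degreeOf_le_iff]
    exact fun e he => (hFXY e he).le
  have e1 : c - r = n * q + 0 := by omega
  have e2 : c + n - r = n * (q + 1) + 0 := by rw [hcr, mul_add]; omega
  rw [e1, e2, hcr, mk_hfun hn0 hF0 hF a b q r (by omega), mk_hfun hn0 hF0 hF a b q 0 hn0,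
    mk_hfun hn0 hF0 hF a b (q + 1) 0 hn0, Finset.sum_range_zero]
  have g1 := mul_neg_geom_sum (PowerSeries.X : PowerSeries ℤ) n
  have g2 := mul_neg_geom_sum (PowerSeries.X : PowerSeries ℤ) r
  have g3 : (PowerSeries.X : PowerSeries ℤ) ^ r - PowerSeries.X ^ n =
    (1 - PowerSeries.X ^ n) - (1 - PowerSeries.X ^ r) := by ring
  rw [g3, ← g1, ← g2]
  ring
end
end

section
/- Let k be an algebraically closed field of characteristic p > 0, n ≥ 2 an integer with p ∤ n. For all integers 1 ≤ r < s ≤ n−1 and every d ∈ ℤ, there is no graded isomorphism of shift d from Syz_R(X^r,Y^r,Z^r) to Syz_R(X^s,Y^s,Z^s); in particular the R-modules Syz_R(X^r,Y^r,Z^r), 1 ≤ r ≤ n−1, are pairwise non-isomorphic as graded modules even up to shift of grading. -/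
/-!
The modules are told apart by the degrees of their minimal generators. Write `K₁, K₂, K₃` for the
Koszul syzygies of `X^r, Y^r, Z^r` (degree `2r`) and `E = (X^(n-r), Y^(n-r), Z^(n-r))`, which is a
syzygy of degree `n` because of the Fermat equation. Lifting a syzygy to `k[X,Y,Z]` and using that
`X^r, Y^r, Z^r` is a regular sequence there, these four elements generate `M_r`
(`exists_koszul_decomp`); moreover, modulo `𝔪 M_r`, the coefficients of a homogeneous syzygy on
`K₁, K₂, K₃` vanish unless its degree is `2r`, and the one on `E` vanishes unless its degree is `n`
(`exists_leading_part`). On the other hand no nontrivial `k`-combination of `E, K₁, K₂` lies in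
`𝔪 M_r` (`coeff_eq_zero_of_mem`): the first entry of an element of `𝔪 M_r` lies in
`𝔪 (X^(n-r), Y^r, Z^r)`, hence has no monomial `X^(n-r)`, `Y^r` or `Z^r`.

A graded isomorphism `e : M_r ≃ M_s` of shift `d` respects `𝔪 M`. If `2r + d ≠ 2s`, then `e K₁` and
`e K₂` are both multiples of `E` modulo `𝔪 M_s`, so they are dependent there, which is impossible.
Hence `d = 2s - 2r > 0`. Now `e E` has degree `n + d ≠ n`, which forces `n + d = 2s`, that is
`n = 2r`; symmetrically `e⁻¹ E` has degree `n - d ≠ n`, which forces `n = 2s`. So `r = s`.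
-/

open MvPolynomial

set_option synthInstance.maxHeartbeats 1000000
set_option maxHeartbeats 1000000

noncomputable section

/-- The Fermat polynomial `X^n + Y^n + Z^n`. -/
def fermatPoly (k : Type*) [Field k] (n : ℕ) : MvP k := X 0 ^ n + X 1 ^ n + X 2 ^ n

/-- The Fermat ring `k[X,Y,Z]/(X^n + Y^n + Z^n)`. -/
abbrev FermatRing (k : Type*) [Field k] (n : ℕ) : Type _ := QuotG (fermatPoly k n)

def fmk (k : Type*) [Field k] (n : ℕ) : MvP k →+* FermatRing k n := qmk _

def syzMap {k : Type*} [Field k] {G : MvP k} (f : Fin 3 → QuotG G) :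
    (Fin 3 → QuotG G) →ₗ[QuotG G] QuotG G where
  toFun g := ∑ i, g i * f i
  map_add' g h := by simp [add_mul, Finset.sum_add_distrib]
  map_smul' c g := by simp [Finset.mul_sum, smul_eq_mul, mul_assoc]

/-- The (first) syzygy module of `f 0, f 1, f 2`: the kernel of
`(g₁,g₂,g₃) ↦ g₁ f₁ + g₂ f₂ + g₃ f₃`. -/
def syz {k : Type*} [Field k] {G : MvP k} (f : Fin 3 → QuotG G) :
    Submodule (QuotG G) (Fin 3 → QuotG G) :=
  LinearMap.ker (syzMap f)

/-- Membership in the degree-`m` homogeneous component of a syzygy module for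
generators of degrees `deg`: each entry is homogeneous of degree `m - deg i` or zero. -/
def inComp {k : Type*} [Field k] {G : MvP k} (deg : Fin 3 → ℤ) (m : ℤ)
    (g : Fin 3 → QuotG G) : Prop :=
  ∀ i, IsHomogZ (g i) (m - deg i)

/-- A graded isomorphism of shift `d` from the syzygy module of `f` (generators of
degrees `df`) to that of `h` (generators of degrees `dh`): a module isomorphism carrying
the degree-`m` homogeneous component onto the degree-`m + d` component, for every `m`. -/
def GradedIso {k : Type*} [Field k] {G : MvP k} (f h : Fin 3 → QuotG G)
    (df dh : Fin 3 → ℤ) (d : ℤ) : Prop :=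
  ∃ e : syz f ≃ₗ[QuotG G] syz h,
    ∀ (m : ℤ) (g : syz f),
      inComp df m (g : Fin 3 → QuotG G) ↔ inComp dh (m + d) ((e g : syz h) : Fin 3 → QuotG G)


/-! ### Syzygies over the polynomial ring -/

section Poly

variable {k : Type*} [Field k]

lemma coeff_single_mul_X_pow (f : MvP k) (i j : Fin 3) (q t : ℕ) (ht : 0 < t) :
    coeff (Finsupp.single j q) (f * X i ^ t) =
      if i = j ∧ t ≤ q then coeff (Finsupp.single j (q - t)) f else 0 := by
  rw [X_pow_eq_monomial, coeff_mul_monomial', mul_one]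
  by_cases hij : i = j
  · subst hij
    simp [← Finsupp.single_tsub]
  · have : ¬ (Finsupp.single i t ≤ Finsupp.single j q) := by
      intro h
      have := h i
      simp [Ne.symm hij] at this
      omega
    simp [this, hij]

lemma mem_span_pow_pair (r : ℕ) (f : MvP k) :
    f ∈ Ideal.span {(X 1 ^ r : MvP k), X 2 ^ r} ↔ ∀ m ∈ f.support, r ≤ m 1 ∨ r ≤ m 2 := by
  have : ({(X 1 ^ r : MvP k), X 2 ^ r} : Set (MvP k)) =
      (fun s => monomial s (1 : k)) '' {Finsupp.single 1 r, Finsupp.single 2 r} := by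
    simp [Set.image_pair, X_pow_eq_monomial]
  rw [this, mem_ideal_span_monomial_image]
  simp [Finsupp.single_le_iff]

/-- `X^r` is a nonzerodivisor modulo `(Y^r, Z^r)`. -/
lemma mem_span_of_mul_X_pow (r : ℕ) (f : MvP k)
    (h : f * X 0 ^ r ∈ Ideal.span {(X 1 ^ r : MvP k), X 2 ^ r}) :
    f ∈ Ideal.span {(X 1 ^ r : MvP k), X 2 ^ r} := by
  rw [mem_span_pow_pair] at h ⊢
  intro m hm
  have := h (m + Finsupp.single 0 r) (by
    rw [mem_support_iff] at hm ⊢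
    rw [X_pow_eq_monomial, coeff_mul_monomial, mul_one]
    exact hm)
  simpa using this

lemma X_pow_dvd_of_dvd_mul (r : ℕ) (f : MvP k) (h : (X 1 : MvP k) ^ r ∣ f * X 2 ^ r) :
    (X 1 : MvP k) ^ r ∣ f := by
  have hp : Prime (X 1 : MvP k) := X_prime
  refine hp.pow_dvd_of_dvd_mul_right r ?_ h
  intro hd
  have := hp.dvd_of_dvd_pow hd
  rw [X_dvd_X] at this
  simp at this

/-- The syzygies of `X^r, Y^r, Z^r` over `k[X,Y,Z]` are generated by the Koszul ones. -/
lemma exists_koszul (r : ℕ) (G : Fin 3 → MvP k) (h : ∑ i, G i * X i ^ r = 0) :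
    ∃ a b c : MvP k, G 0 = a * X 1 ^ r + b * X 2 ^ r ∧ G 1 = -(a * X 0 ^ r) + c * X 2 ^ r ∧
      G 2 = -(b * X 0 ^ r) - c * X 1 ^ r := by
  rw [Fin.sum_univ_three] at h
  have h0 : G 0 ∈ Ideal.span {(X 1 ^ r : MvP k), X 2 ^ r} := by
    apply mem_span_of_mul_X_pow
    rw [Ideal.mem_span_pair]
    exact ⟨-G 1, -G 2, by linear_combination -h⟩
  obtain ⟨a, b, hab⟩ := Ideal.mem_span_pair.1 h0
  have h1 : (X 1 : MvP k) ^ r ∣ G 2 + b * X 0 ^ r := by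
    apply X_pow_dvd_of_dvd_mul
    exact ⟨-(G 1 + a * X 0 ^ r), by linear_combination h + X 0 ^ r * hab⟩
  obtain ⟨c, hc⟩ := h1
  refine ⟨a, b, -c, hab.symm, ?_, by linear_combination hc⟩
  have hne : (X 1 : MvP k) ^ r ≠ 0 := pow_ne_zero _ (X_ne_zero _)
  apply mul_right_cancel₀ hne
  linear_combination h + X 0 ^ r * hab - X 2 ^ r * hc

/-- A syzygy of `X^r, Y^r, Z^r` modulo the Fermat polynomial is a combination of
`(X^(n-r), Y^(n-r), Z^(n-r))` and the Koszul syzygies. -/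
lemma exists_koszul_decomp {n r : ℕ} (hr : r ≤ n) (G : Fin 3 → MvP k)
    (h : fermatPoly k n ∣ ∑ i, G i * X i ^ r) :
    ∃ u a b c : MvP k, G 0 = u * X 0 ^ (n - r) + a * X 1 ^ r + b * X 2 ^ r ∧
      G 1 = u * X 1 ^ (n - r) - a * X 0 ^ r + c * X 2 ^ r ∧
      G 2 = u * X 2 ^ (n - r) - b * X 0 ^ r - c * X 1 ^ r := by
  obtain ⟨u, hu⟩ := h
  have key : ∀ i : Fin 3, (X i : MvP k) ^ n = X i ^ (n - r) * X i ^ r := fun i => by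
    rw [← pow_add, Nat.sub_add_cancel hr]
  obtain ⟨a, b, c, h0, h1, h2⟩ := exists_koszul r (fun i => G i - u * X i ^ (n - r)) (by
    rw [Fin.sum_univ_three] at hu ⊢
    rw [fermatPoly, key, key, key] at hu
    linear_combination hu)
  exact ⟨u, a, b, c, by linear_combination h0, by linear_combination h1,
    by linear_combination h2⟩

end Poly

/-! ### Generators of the syzygy modules over the Fermat ring -/

section Syz

variable {k : Type*} [Field k]

/-- The syzygy module `Syz_R(X^r, Y^r, Z^r)` over the Fermat ring. -/
abbrev fermatSyz (k : Type*) [Field k] (n r : ℕ) :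
    Submodule (FermatRing k n) (Fin 3 → FermatRing k n) :=
  syz (fun i => fmk k n (X i ^ r))

/-- The irrelevant ideal of the Fermat ring, as the image of the ideal of polynomials without
constant term. -/
def irr (k : Type*) [Field k] (n : ℕ) : Ideal (FermatRing k n) :=
  Ideal.map (fmk k n) (RingHom.ker (constantCoeff : MvP k →+* k))

lemma fmk_surjective (k : Type*) [Field k] (n : ℕ) : Function.Surjective (fmk k n) :=
  Ideal.Quotient.mk_surjective

lemma fmk_eq_zero {n : ℕ} (P : MvP k) : fmk k n P = 0 ↔ fermatPoly k n ∣ P := by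
  rw [← Ideal.mem_span_singleton]
  exact Ideal.Quotient.eq_zero_iff_mem

lemma mem_fermatSyz {n r : ℕ} (G : Fin 3 → MvP k) :
    (fun i => fmk k n (G i)) ∈ fermatSyz k n r ↔ fermatPoly k n ∣ ∑ i, G i * X i ^ r := by
  rw [← fmk_eq_zero, map_sum]
  simp only [map_mul]
  exact LinearMap.mem_ker

/-- The syzygy `(X^(n-r), Y^(n-r), Z^(n-r))` given by the Fermat equation. -/
def genE (k : Type*) [Field k] {n r : ℕ} (hr : r ≤ n) : fermatSyz k n r :=
  ⟨fun i => fmk k n (X i ^ (n - r)), (mem_fermatSyz _).2 ⟨1, by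
    simp only [Fin.sum_univ_three, ← pow_add, Nat.sub_add_cancel hr, fermatPoly, mul_one]⟩⟩

/-- The Koszul syzygy `(Y^r, -X^r, 0)`. -/
def genK₁ (k : Type*) [Field k] (n r : ℕ) : fermatSyz k n r :=
  ⟨fun i => fmk k n (![X 1 ^ r, -X 0 ^ r, 0] i), (mem_fermatSyz _).2 ⟨0, by
    simp [Fin.sum_univ_three]; ring⟩⟩

/-- The Koszul syzygy `(Z^r, 0, -X^r)`. -/
def genK₂ (k : Type*) [Field k] (n r : ℕ) : fermatSyz k n r :=
  ⟨fun i => fmk k n (![X 2 ^ r, 0, -X 0 ^ r] i), (mem_fermatSyz _).2 ⟨0, by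
    simp [Fin.sum_univ_three]; ring⟩⟩

/-- The Koszul syzygy `(0, Z^r, -Y^r)`. -/
def genK₃ (k : Type*) [Field k] (n r : ℕ) : fermatSyz k n r :=
  ⟨fun i => fmk k n (![0, X 2 ^ r, -X 1 ^ r] i), (mem_fermatSyz _).2 ⟨0, by
    simp [Fin.sum_univ_three]; ring⟩⟩

/-- `simp` does not apply `zero_smul` here by itself: the scalar action on the submodule is found
along a path that is not reducibly equal to the one in `zero_smul`. -/
lemma zero_smul_fermatSyz {n r : ℕ} (g : fermatSyz k n r) : (0 : FermatRing k n) • g = 0 :=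
  Subtype.ext (funext fun i => zero_mul ((g : Fin 3 → FermatRing k n) i))

lemma isHomogZ_fmk {n : ℕ} (P : MvP k) (t : ℕ) (d : ℤ) (hP : P.IsHomogeneous t)
    (hd : (t : ℤ) = d) : IsHomogZ (fmk k n P) d :=
  Or.inr ⟨t, hd, P, hP, rfl⟩

lemma inComp_genE {n r : ℕ} (hr : r ≤ n) :
    inComp (fun _ => (r : ℤ)) n (genE k hr : Fin 3 → FermatRing k n) := fun i =>
  isHomogZ_fmk _ (n - r) _ (isHomogeneous_X_pow i _) (Nat.cast_sub hr)

lemma inComp_genK₁ (n r : ℕ) :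
    inComp (fun _ => (r : ℤ)) (2 * r) (genK₁ k n r : Fin 3 → FermatRing k n) := by
  intro i
  refine isHomogZ_fmk _ r _ ?_ (by ring)
  fin_cases i
  · exact isHomogeneous_X_pow _ _
  · exact (isHomogeneous_X_pow _ _).neg
  · exact isHomogeneous_zero _ _ _

lemma inComp_genK₂ (n r : ℕ) :
    inComp (fun _ => (r : ℤ)) (2 * r) (genK₂ k n r : Fin 3 → FermatRing k n) := by
  intro i
  refine isHomogZ_fmk _ r _ ?_ (by ring)
  fin_cases i
  · exact isHomogeneous_X_pow _ _
  · exact isHomogeneous_zero _ _ _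
  · exact (isHomogeneous_X_pow _ _).neg

/-- A homogeneous class of degree `d` has a representative whose pure powers of a variable all have
exponent `d`; the zero class is represented by `0`. -/
lemma exists_rep_s3 {n : ℕ} (x : FermatRing k n) (d : ℤ) (h : IsHomogZ x d) :
    ∃ P : MvP k, fmk k n P = x ∧ ∀ (j : Fin 3) (q : ℕ),
      coeff (Finsupp.single j q) P ≠ 0 → (q : ℤ) = d := by
  rcases h with h | ⟨t, ht, P, hP, hx⟩
  · exact ⟨0, by simp [h], by simp⟩
  · refine ⟨P, hx, fun j q hq => ?_⟩
    have := hP hq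
    rw [Finsupp.weight_single] at this
    simp at this
    omega

/-! ### Degrees of minimal generators -/

lemma sub_C_mem_irr (n : ℕ) (u : MvP k) :
    fmk k n (u - C (constantCoeff u)) ∈ irr k n :=
  Ideal.mem_map_of_mem _ (by simp [RingHom.mem_ker])

/-- A homogeneous syzygy of degree `m` is, modulo `𝔪 M_r`, a `k`-combination of the generators
whose degree is `m`. -/
lemma exists_leading_part {n r : ℕ} (hr : 0 < r) (hrn : r < n) (m : ℤ) (g : fermatSyz k n r)
    (hg : inComp (fun _ => (r : ℤ)) m (g : Fin 3 → FermatRing k n)) :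
    ∃ u a b c : k,
      g - (fmk k n (C u) • genE k hrn.le + fmk k n (C a) • genK₁ k n r +
        fmk k n (C b) • genK₂ k n r + fmk k n (C c) • genK₃ k n r) ∈
          irr k n • (⊤ : Submodule (FermatRing k n) (fermatSyz k n r)) ∧
      (m ≠ n → u = 0) ∧ (m ≠ 2 * r → a = 0 ∧ b = 0 ∧ c = 0) := by
  choose G hG hdeg using fun i => exists_rep_s3 _ _ (hg i)
  have hsyz : fermatPoly k n ∣ ∑ i, G i * X i ^ r := by
    rw [← mem_fermatSyz]
    convert g.2 using 1
    exact funext hG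
  obtain ⟨u, a, b, c, h0, h1, h2⟩ := exists_koszul_decomp hrn.le G hsyz
  have hnr : 0 < n - r := by omega
  -- the constant terms are read off from pure powers of the variables in `G 0` and `G 1`
  have hu : coeff (Finsupp.single 0 (n - r)) (G 0) = constantCoeff u := by
    rw [h0]
    simp [coeff_single_mul_X_pow, hr, hnr, constantCoeff_eq, -Finsupp.single_tsub]
  have ha : coeff (Finsupp.single 1 r) (G 0) = constantCoeff a := by
    rw [h0]
    simp [coeff_single_mul_X_pow, hr, hnr, constantCoeff_eq]
  have hb : coeff (Finsupp.single 2 r) (G 0) = constantCoeff b := by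
    rw [h0]
    simp [coeff_single_mul_X_pow, hr, hnr, constantCoeff_eq]
  have hc : coeff (Finsupp.single 2 r) (G 1) = constantCoeff c := by
    rw [h1]
    simp [coeff_single_mul_X_pow, hr, hnr, constantCoeff_eq]
  refine ⟨constantCoeff u, constantCoeff a, constantCoeff b, constantCoeff c, ?_, ?_, ?_⟩
  · have hgen : g = fmk k n u • genE k hrn.le + fmk k n a • genK₁ k n r +
        fmk k n b • genK₂ k n r + fmk k n c • genK₃ k n r := by
      apply Subtype.ext
      funext i
      rw [← hG i]
      fin_cases i
      · simp [h0, genE, genK₁, genK₂, genK₃]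
      · simp [h1, genE, genK₁, genK₂, genK₃]
        ring
      · simp [h2, genE, genK₁, genK₂, genK₃]
        ring
    have hsub : g - (fmk k n (C (constantCoeff u)) • genE k hrn.le +
        fmk k n (C (constantCoeff a)) • genK₁ k n r +
        fmk k n (C (constantCoeff b)) • genK₂ k n r +
        fmk k n (C (constantCoeff c)) • genK₃ k n r) =
        fmk k n (u - C (constantCoeff u)) • genE k hrn.le +
        fmk k n (a - C (constantCoeff a)) • genK₁ k n r +
        fmk k n (b - C (constantCoeff b)) • genK₂ k n r +
        fmk k n (c - C (constantCoeff c)) • genK₃ k n r := by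
      conv_lhs => rw [hgen]
      simp only [map_sub]
      module
    rw [hsub]
    exact add_mem (add_mem (add_mem
      (Submodule.smul_mem_smul (sub_C_mem_irr n u) trivial)
      (Submodule.smul_mem_smul (sub_C_mem_irr n a) trivial))
      (Submodule.smul_mem_smul (sub_C_mem_irr n b) trivial))
      (Submodule.smul_mem_smul (sub_C_mem_irr n c) trivial)
  · intro hm
    by_contra hne
    have := hdeg 0 0 (n - r) (by rwa [hu])
    dsimp only at this
    omega
  · intro hm
    refine ⟨?_, ?_, ?_⟩ <;> by_contra hne
    · have := hdeg 0 1 r (by rwa [ha])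
      dsimp only at this
      omega
    · have := hdeg 0 2 r (by rwa [hb])
      dsimp only at this
      omega
    · have := hdeg 1 2 r (by rwa [hc])
      dsimp only at this
      omega

/-- The first entry of an element of `𝔪 M_r` has no monomial `X^(n-r)`, `Y^r` or `Z^r`. -/
lemma coeff_first_eq_zero {n r : ℕ} (hr : 0 < r) (hrn : r < n) (g : fermatSyz k n r)
    (hg : g ∈ irr k n • (⊤ : Submodule (FermatRing k n) (fermatSyz k n r))) (P : MvP k)
    (hP : fmk k n P = (g : Fin 3 → FermatRing k n) 0) :
    coeff (Finsupp.single 0 (n - r)) P = 0 ∧ coeff (Finsupp.single 1 r) P = 0 ∧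
      coeff (Finsupp.single 2 r) P = 0 := by
  have hnr : 0 < n - r := by omega
  have hn : 0 < n := by omega
  induction hg using Submodule.smul_induction_on' generalizing P with
  | smul x hx g _ =>
    obtain ⟨v, hv, rfl⟩ := (Ideal.mem_map_iff_of_surjective _ (fmk_surjective k n)).1 hx
    rw [RingHom.mem_ker, constantCoeff_eq] at hv
    choose G hG using fun i => fmk_surjective k n ((g : Fin 3 → FermatRing k n) i)
    have hsyz : fermatPoly k n ∣ ∑ i, G i * X i ^ r := by
      rw [← mem_fermatSyz]
      convert g.2 using 1
      exact funext hG
    obtain ⟨u, a, b, -, h0, -, -⟩ := exists_koszul_decomp hrn.le G hsyz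
    have hd : fermatPoly k n ∣ P - v * G 0 := by
      rw [← fmk_eq_zero, map_sub, map_mul, hG 0, hP, sub_eq_zero]
      rfl
    obtain ⟨w, hw⟩ := hd
    have hPe : P = w * X 0 ^ n + w * X 1 ^ n + w * X 2 ^ n + (v * u) * X 0 ^ (n - r) +
        (v * a) * X 1 ^ r + (v * b) * X 2 ^ r := by
      rw [fermatPoly] at hw
      linear_combination hw + v * h0
    have hv0 : ∀ z : MvP k, coeff 0 (v * z) = 0 := fun z => by
      rw [← constantCoeff_eq, map_mul, constantCoeff_eq, hv, zero_mul]
    have hlt : ¬ n ≤ n - r := by omega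
    have hlt' : ¬ n ≤ r := by omega
    rw [hPe]
    refine ⟨?_, ?_, ?_⟩ <;>
      simp [coeff_single_mul_X_pow, hr, hnr, hn, hv0, hlt, hlt', -Finsupp.single_tsub,
        -tsub_le_iff_right]
  | add g _ g' _ ih ih' =>
    obtain ⟨Q, hQ⟩ := fmk_surjective k n ((g : Fin 3 → FermatRing k n) 0)
    have h1 := ih Q hQ
    have h2 := ih' (P - Q) (by rw [map_sub, hP, hQ]; simp)
    simpa [h1, -Finsupp.single_tsub] using h2

/-- The classes of `E`, `K₁`, `K₂` in `M_r / 𝔪 M_r` are linearly independent over `k`. -/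
lemma coeff_eq_zero_of_mem {n r : ℕ} (hr : 0 < r) (hrn : r < n) (u a b : k)
    (h : fmk k n (C u) • genE k hrn.le + fmk k n (C a) • genK₁ k n r +
        fmk k n (C b) • genK₂ k n r ∈
          irr k n • (⊤ : Submodule (FermatRing k n) (fermatSyz k n r))) :
    u = 0 ∧ a = 0 ∧ b = 0 := by
  have hnr : 0 < n - r := by omega
  have := coeff_first_eq_zero hr hrn _ h
    (C u * X 0 ^ (n - r) + C a * X 1 ^ r + C b * X 2 ^ r) (by simp [genE, genK₁, genK₂])
  simpa [coeff_single_mul_X_pow, hr, hnr, -Finsupp.single_tsub, -coeff_C_mul] using this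

lemma genE_notMem {n r : ℕ} (hr : 0 < r) (hrn : r < n) :
    genE k hrn.le ∉ irr k n • (⊤ : Submodule (FermatRing k n) (fermatSyz k n r)) := by
  intro h
  have := coeff_eq_zero_of_mem hr hrn (1 : k) 0 0 (by
    simpa [zero_smul_fermatSyz] using h)
  simp at this

/-- Every homogeneous element outside `𝔪 M_r` has degree `n` or `2r`. -/
lemma degree_eq_or_eq {n r : ℕ} (hr : 0 < r) (hrn : r < n) (m : ℤ) (g : fermatSyz k n r)
    (hg : inComp (fun _ => (r : ℤ)) m (g : Fin 3 → FermatRing k n))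
    (hn : g ∉ irr k n • (⊤ : Submodule (FermatRing k n) (fermatSyz k n r))) :
    m = n ∨ m = 2 * r := by
  by_contra! hm
  obtain ⟨u, a, b, c, h, hu, habc⟩ := exists_leading_part hr hrn m g hg
  obtain ⟨ha, hb, hc⟩ := habc hm.2
  exact hn (by simpa [hu hm.1, ha, hb, hc, zero_smul_fermatSyz] using h)

/-- Two homogeneous elements of the same degree `m ≠ 2r` are dependent modulo `𝔪 M_r`. -/
lemma exists_dependence {n r : ℕ} (hr : 0 < r) (hrn : r < n) (m : ℤ) (hm : m ≠ 2 * r)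
    (g g' : fermatSyz k n r)
    (hg : inComp (fun _ => (r : ℤ)) m (g : Fin 3 → FermatRing k n))
    (hg' : inComp (fun _ => (r : ℤ)) m (g' : Fin 3 → FermatRing k n)) :
    ∃ a b : k, (a ≠ 0 ∨ b ≠ 0) ∧ fmk k n (C a) • g + fmk k n (C b) • g' ∈
      irr k n • (⊤ : Submodule (FermatRing k n) (fermatSyz k n r)) := by
  obtain ⟨u, a, b, c, h, -, habc⟩ := exists_leading_part hr hrn m g hg
  obtain ⟨u', a', b', c', h', -, habc'⟩ := exists_leading_part hr hrn m g' hg'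
  obtain ⟨rfl, rfl, rfl⟩ := habc hm
  obtain ⟨rfl, rfl, rfl⟩ := habc' hm
  simp only [map_zero, zero_smul_fermatSyz, add_zero] at h h'
  by_cases hu : u = 0
  · refine ⟨1, 0, by simp, ?_⟩
    simpa [hu, zero_smul_fermatSyz] using h
  · refine ⟨u', -u, by simp [hu], ?_⟩
    have := sub_mem (Submodule.smul_mem _ (fmk k n (C u')) h)
      (Submodule.smul_mem _ (fmk k n (C u)) h')
    convert this using 1
    simp only [map_neg]
    module

end Syz

lemma linearEquiv_mem_smul_top_iff {A M N : Type*} [CommRing A] [AddCommGroup M]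
    [AddCommGroup N] [Module A M] [Module A N] (e : M ≃ₗ[A] N) (I : Ideal A) (x : M) :
    e x ∈ I • (⊤ : Submodule A N) ↔ x ∈ I • (⊤ : Submodule A M) := by
  have : I • (⊤ : Submodule A N) = (I • (⊤ : Submodule A M)).map (e : M →ₗ[A] N) := by
    rw [Submodule.map_smul'', Submodule.map_top, LinearEquiv.range]
  rw [this, Submodule.mem_map]
  exact ⟨fun ⟨y, hy, hyx⟩ => e.injective hyx ▸ hy, fun hx => ⟨x, hx, rfl⟩⟩

/-- In the Fermat ring with `p ∤ n`, the graded syzygy modules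
`Syz_R(X^r, Y^r, Z^r)`, `1 ≤ r ≤ n-1`, are pairwise non-isomorphic even up to shift. -/
theorem stmt3 {k : Type*} [Field k] [IsAlgClosed k] {p : ℕ} (hchar : CharP k p)
    (hp : 0 < p) (n : ℕ) (hn : 2 ≤ n) (hpn : ¬ p ∣ n) :
    ∀ r s : ℕ, 1 ≤ r → r < s → s ≤ n - 1 → ∀ d : ℤ,
      ¬ GradedIso (fun i => fmk k n (X i ^ r)) (fun i => fmk k n (X i ^ s))
        (fun _ => (r : ℤ)) (fun _ => (s : ℤ)) d := by
  rintro r s hr hrs hsn d ⟨e, he⟩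
  have hrn : r < n := by omega
  have hsn' : s < n := by omega
  have hs : 1 ≤ s := by omega
  have hd : 2 * (r : ℤ) + d = 2 * s := by
    by_contra hne
    obtain ⟨a, b, hab, hmem⟩ := exists_dependence hs hsn' _ hne _ _
      ((he _ _).1 (inComp_genK₁ n r)) ((he _ _).1 (inComp_genK₂ n r))
    rw [← map_smul, ← map_smul, ← map_add] at hmem
    replace hmem := (linearEquiv_mem_smul_top_iff e _ _).1 hmem
    have := coeff_eq_zero_of_mem hr hrn 0 a b (by simpa [zero_smul_fermatSyz] using hmem)
    tauto
  have h1 := degree_eq_or_eq hs hsn' _ _ ((he _ _).1 (inComp_genE hrn.le))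
    (fun h => genE_notMem hr hrn ((linearEquiv_mem_smul_top_iff e _ _).1 h))
  have h2 := degree_eq_or_eq hr hrn (n - d) (e.symm (genE k hsn'.le))
    ((he _ _).2 (by
      rw [e.apply_symm_apply, sub_add_cancel]
      exact inComp_genE hsn'.le))
    (fun h => genE_notMem hs hsn' ((linearEquiv_mem_smul_top_iff e.symm _ _).1 h))
  omega
end
end

section
/- Let k be an algebraically closed field of characteristic p > 0, n ≥ 1 an integer with p ∤ n, and let b = nl + r with l ≥ 0 even, 0 ≤ r ≤ n−1 and 3r > 2n. Set m := n(l + 1 + l/2). Then in the Fermat ring R = k[X,Y,Z]/(X^n+Y^n+Z^n) there exists a nonzero triple (g₁,g₂,g₃) ∈ R³ with each gᵢ homogeneous of degree m − b (or zero) such that g₁·X^b + g₂·Y^b + g₃·Z^b = 0 in R. (This is the statement Γ(C, Syz_C(X^b,Y^b,Z^b)(n(l+1+l/2))) ≠ 0.) -/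
/-!
The idea is to reduce the problem to binary forms. Put `U = X^n`, `V = Y^n`, so that
`Z^n = -(U + V)` in the Fermat ring, and write `l = 2j`. Looking for a syzygy of the shape
`(X^(n-r) A, Y^(n-r) B, Z^(n-r) D)` with `A, B, D` binary forms of degree `j` in `U, V`, the
condition becomes
`A U^(l+1) + B V^(l+1) + D (-(U+V))^(l+1) = 0`,
an equation between forms of degree `3j + 1`. It is a homogeneous linear system of `3j + 2`
equations in the `3(j+1)` coefficients of `A, B, D`, hence has a nontrivial solution
(`exists_binary_syzygy`). In such a solution `A` and `B` cannot both vanish, because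
`k[X,Y,Z]` is a domain. Finally, a nonzero polynomial not involving `Z` stays nonzero in the Fermat
ring (`fmk_ne_zero`): over an algebraically closed field every point `(x, y)` of the plane lifts to
a point of the affine Fermat cone.
-/

open MvPolynomial

set_option synthInstance.maxHeartbeats 1000000
set_option maxHeartbeats 1000000

noncomputable section

/-- The binary form `∑ cᵢ U^i V^(j-i)` of degree `j`, where `U = X^n` and `V = Y^n`. -/
def binForm {k : Type*} [Field k] (n j : ℕ) (c : Fin (j + 1) → k) : MvP k :=
  ∑ i : Fin (j + 1), c i • ((X 0 ^ n) ^ (i : ℕ) * (X 1 ^ n) ^ (j - i))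

lemma binForm_homog {k : Type*} [Field k] (n j : ℕ) (c : Fin (j + 1) → k) :
    (binForm n j c).IsHomogeneous (n * j) := by
  refine IsHomogeneous.sum _ _ _ fun i _ => ?_
  rw [smul_eq_C_mul]
  have h := (isHomogeneous_C (Fin 3) (c i)).mul
    ((((isHomogeneous_X k (0 : Fin 3)).pow n).pow (i : ℕ)).mul
      (((isHomogeneous_X k (1 : Fin 3)).pow n).pow (j - i)))
  convert h using 1
  have : j = i + (j - i) := by omega
  conv_lhs => rw [this]
  ring

lemma binForm_ne_zero {k : Type*} [Field k] {n j : ℕ} (hn : 1 ≤ n) {c : Fin (j + 1) → k}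
    {i₀ : Fin (j + 1)} (hc : c i₀ ≠ 0) : binForm n j c ≠ 0 := by
  intro h
  let e : Fin (j + 1) → (Fin 3 →₀ ℕ) := fun i =>
    Finsupp.single 0 (n * i) + Finsupp.single 1 (n * (j - i))
  have he : Function.Injective e := by
    intro a b hab
    have h0 := DFunLike.congr_fun hab 0
    simp [e] at h0
    rcases h0 with h0 | h0
    · exact Fin.ext h0
    · omega
  have hA : binForm n j c = ∑ i, monomial (e i) (c i) := by
    refine Finset.sum_congr rfl fun i _ => ?_
    rw [← pow_mul, ← pow_mul, X_pow_eq_monomial, X_pow_eq_monomial, monomial_mul, smul_monomial]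
    simp [e]
  have h1 := congrArg (coeff (e i₀)) h
  rw [hA, coeff_sum] at h1
  simp only [coeff_monomial, he.eq_iff] at h1
  simp at h1
  exact hc h1

lemma eval_binForm_update {k : Type*} [Field k] (n j : ℕ) (c : Fin (j + 1) → k)
    (f : Fin 3 → k) (z : k) :
    eval (Function.update f 2 z) (binForm n j c) = eval f (binForm n j c) := by
  simp [binForm, smul_eval]

/-- A nonzero polynomial that does not involve `Z` has nonzero residue class. -/
lemma fmk_ne_zero {k : Type*} [Field k] [IsAlgClosed k] {n : ℕ} (hn : 1 ≤ n) {P : MvP k}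
    (hP : P ≠ 0) (hz : ∀ f z, eval (Function.update f 2 z) P = eval f P) : fmk k n P ≠ 0 := by
  intro h
  apply hP
  obtain ⟨Q, hQ⟩ := Ideal.mem_span_singleton'.1 (Ideal.Quotient.eq_zero_iff_mem.1 h)
  have : Infinite k := IsAlgClosed.instInfinite
  refine MvPolynomial.funext fun f => ?_
  obtain ⟨z, hzn⟩ := IsAlgClosed.exists_pow_nat_eq (-(f 0 ^ n + f 1 ^ n)) hn
  rw [← hz f z, ← hQ]
  simp [fermatPoly, hzn]

lemma fmk_Z_pow {k : Type*} [Field k] (n : ℕ) :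
    fmk k n (X 2 ^ n) = fmk k n (-(X 0 ^ n + X 1 ^ n)) := by
  refine Ideal.Quotient.eq.2 (Ideal.mem_span_singleton'.2 ⟨1, ?_⟩)
  rw [fermatPoly]
  ring

/-- The three powers `U^(2j+1)`, `V^(2j+1)`, `(-(U+V))^(2j+1)` have a nontrivial syzygy with
entries of degree `j`: there are `3(j+1)` unknown coefficients and only `3j+2` monomials of degree
`3j+1`. -/
lemma exists_binary_syzygy {k : Type*} [Field k] (n j : ℕ) :
    ∃ c : Fin 3 → Fin (j + 1) → k, (∃ s i, c s i ≠ 0) ∧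
      binForm n j (c 0) * (X 0 ^ n) ^ (2 * j + 1) + binForm n j (c 1) * (X 1 ^ n) ^ (2 * j + 1)
        + binForm n j (c 2) * (-(X 0 ^ n + X 1 ^ n)) ^ (2 * j + 1) = 0 := by
  let U : MvP k := X 0 ^ n
  let V : MvP k := X 1 ^ n
  let L : Fin 3 → MvP k := ![U, V, -(U + V)]
  let v : Fin 3 × Fin (j + 1) → MvP k := fun q =>
    U ^ (q.2 : ℕ) * V ^ (j - q.2) * L q.1 ^ (2 * j + 1)
  let w : Fin (3 * j + 2) → MvP k := fun t => U ^ (t : ℕ) * V ^ (3 * j + 1 - t)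
  have hw : ∀ a b, a + b = 3 * j + 1 → U ^ a * V ^ b ∈ Submodule.span k (Set.range w) := by
    intro a b hab
    refine Submodule.subset_span ⟨⟨a, by omega⟩, ?_⟩
    simp only [w]
    congr 2
    omega
  have hv : ∀ q, v q ∈ Submodule.span k (Set.range w) := by
    rintro ⟨s, i⟩
    have hi : (i : ℕ) + (j - i) = j := by omega
    fin_cases s
    · have := hw (i + (2 * j + 1)) (j - i) (by omega)
      convert this using 1
      simp only [v, L, Matrix.cons_val_zero, Fin.zero_eta]
      ring
    · have := hw i (j - i + (2 * j + 1)) (by omega)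
      convert this using 1
      simp only [v, L, Matrix.cons_val_one, Fin.mk_one, Matrix.cons_val_zero]
      ring
    · have hL : v (2, i) = -∑ t ∈ Finset.range (2 * j + 1 + 1),
          ((2 * j + 1).choose t) • (U ^ (i + t) * V ^ (j - i + (2 * j + 1 - t))) := by
        have : L 2 = -(U + V) := rfl
        simp only [v, this]
        rw [Odd.neg_pow ⟨j, rfl⟩, add_pow, mul_neg, Finset.mul_sum]
        congr 1
        refine Finset.sum_congr rfl fun t _ => ?_
        rw [nsmul_eq_mul]
        ring
      change v (2, i) ∈ _
      rw [hL]
      refine Submodule.neg_mem _ (Submodule.sum_mem _ fun t ht => ?_)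
      rw [Finset.mem_range] at ht
      exact nsmul_mem (hw _ _ (by omega)) _
  have hdep : ¬ LinearIndependent k v := by
    intro hli
    have : Module.Finite k (Submodule.span k (Set.range w)) :=
      Module.Finite.span_of_finite k (Set.finite_range w)
    have h1 : LinearIndependent k
        (fun q => (⟨v q, hv q⟩ : Submodule.span k (Set.range w))) :=
      LinearIndependent.of_comp (Submodule.subtype _) hli
    have h2 := h1.fintype_card_le_finrank
    have h3 : Module.finrank k (Submodule.span k (Set.range w)) ≤ _ := finrank_range_le_card w
    simp only [Fintype.card_prod, Fintype.card_fin] at h2 h3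
    omega
  rw [Fintype.not_linearIndependent_iff] at hdep
  obtain ⟨g, hg, ⟨s, i⟩, hne⟩ := hdep
  refine ⟨fun s i => g (s, i), ⟨s, i, hne⟩, ?_⟩
  rw [Fintype.sum_prod_type, Fin.sum_univ_three] at hg
  rw [← hg]
  simp only [binForm, Finset.sum_mul, smul_mul_assoc]
  rfl

/-- If `b = nl + r` with `l` even and `3r > 2n`, then
`Γ(C, Syz_C(X^b,Y^b,Z^b)(n(l+1+l/2))) ≠ 0`: there is a nonzero syzygy for
`X^b, Y^b, Z^b` in the Fermat ring whose entries are homogeneous of degree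
`n(l+1+l/2) - b` (or zero). -/
theorem stmt8 {k : Type*} [Field k] [IsAlgClosed k] {p : ℕ} (hchar : CharP k p)
    (hp : 0 < p) (n b l r : ℕ) (hn : 1 ≤ n) (hpn : ¬ p ∣ n) (hb : b = n * l + r)
    (hl : Even l) (hr : r ≤ n - 1) (hr2 : 2 * n < 3 * r) :
    ∃ g : Fin 3 → FermatRing k n, g ≠ 0 ∧
      (∀ i, IsHomogZ (g i) (((n * (l + 1 + l / 2) : ℕ) : ℤ) - b)) ∧
      g 0 * fmk k n (X 0 ^ b) + g 1 * fmk k n (X 1 ^ b) + g 2 * fmk k n (X 2 ^ b) = 0 := by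
  obtain ⟨j, hj⟩ := hl
  obtain rfl : l = 2 * j := by omega
  have hrn : r ≤ n := by omega
  obtain ⟨c, ⟨s, i, hne⟩, hsyz⟩ := exists_binary_syzygy (k := k) n j
  set F : Fin 3 → MvP k := fun t => binForm n j (c t) with hF
  have hF01 : F 0 ≠ 0 ∨ F 1 ≠ 0 := by
    by_contra! h
    obtain ⟨h0, h1⟩ := h
    have hs : F s ≠ 0 := binForm_ne_zero hn hne
    change F 0 * _ + F 1 * _ + F 2 * _ = 0 at hsyz
    rw [h0, h1, zero_mul, zero_mul, zero_add, zero_add] at hsyz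
    -- `X^n + Y^n` is the binary form of degree one with both coefficients equal to `1`.
    have hUV : (-(X 0 ^ n + X 1 ^ n) : MvP k) ≠ 0 := by
      have := binForm_ne_zero (k := k) (j := 1) hn (c := fun _ => 1) (i₀ := 0) one_ne_zero
      rw [neg_ne_zero]
      simpa [binForm, Fin.sum_univ_two, add_comm] using this
    have h2 : F 2 = 0 := (mul_eq_zero.1 hsyz).resolve_right (pow_ne_zero _ hUV)
    fin_cases s
    · exact hs h0
    · exact hs h1
    · exact hs h2
  refine ⟨fun t => fmk k n (X t ^ (n - r) * F t), ?_, fun t => Or.inr ⟨n - r + n * j, ?_, ?_⟩, ?_⟩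
  · intro h
    rcases hF01 with h0 | h1
    · refine fmk_ne_zero hn (mul_ne_zero (pow_ne_zero (n - r) (X_ne_zero 0)) h0) ?_
        (congrFun h 0)
      intro f z
      simp [hF, eval_binForm_update]
    · refine fmk_ne_zero hn (mul_ne_zero (pow_ne_zero (n - r) (X_ne_zero 1)) h1) ?_
        (congrFun h 1)
      intro f z
      simp [hF, eval_binForm_update]
  · have : 2 * j / 2 = j := by omega
    rw [this, hb]
    push_cast [hrn]
    ring
  · refine ⟨_, ?_, rfl⟩
    have := ((isHomogeneous_X k t).pow (n - r)).mul (binForm_homog n j (c t))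
    rwa [one_mul] at this
  · have key : ∀ t : Fin 3, fmk k n (X t ^ (n - r) * F t) * fmk k n (X t ^ b)
        = fmk k n (F t) * fmk k n (X t ^ n) ^ (2 * j + 1) := by
      intro t
      rw [← map_mul, ← map_pow, ← map_mul]
      congr 1
      have : n * (2 * j + 1) = n - r + b := by
        rw [hb, mul_add]
        omega
      rw [← pow_mul, this, pow_add]
      ring
    simp only [key]
    rw [fmk_Z_pow]
    simp only [← map_pow, ← map_mul, ← map_add]
    change fmk k n (F 0 * _ + F 1 * _ + F 2 * _) = 0
    rw [hsyz, map_zero]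
end
end

section
/- Let k be an algebraically closed field of characteristic p > 0, n ≥ 1 an integer with p ∤ n, and let b = nl + r with l ≥ 1 odd, 0 ≤ r ≤ n−1 and 3r < n. Set m := n(l + (l−1)/2) + 3r. Then in the Fermat ring R = k[X,Y,Z]/(X^n+Y^n+Z^n) there exists a nonzero triple (g₁,g₂,g₃) ∈ R³ with each gᵢ homogeneous of degree m − b = n(l−1)/2 + 2r (or zero) such that g₁·X^b + g₂·Y^b + g₃·Z^b = 0 in R. (This is the statement Γ(C, Syz_C(X^b,Y^b,Z^b)(n(l+⌊l/2⌋)+3r)) ≠ 0.) -/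
/-!
Write `u = X^n`, `v = Y^n`, `w = Z^n` and `l = 2t + 1`. A relation `A u^l + B v^l + C w^l = 0` in
`k[u, v]` with `w = -(u + v)` and `A, B, C` forms of degree `t` gives, after multiplication by
`(XYZ)^r`, the syzygy `(Y^r Z^r A, X^r Z^r B, X^r Y^r C)` of `X^b, Y^b, Z^b`, with entries of degree
`nt + 2r`. Such a relation is found by counting dimensions: the triples `(A, B, C)` form a space of
dimension `3t + 3`, while the forms of degree `t + l = 3t + 1` in two variables form one of dimension
`3t + 2` (`exists_univariate_relation`, in the dehomogenization `v = 1`). Its component `C` is nonzero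
because `t < l`, and then `X^r Y^r C(X^n, Y^n)` is nonzero in the Fermat ring because over an
algebraically closed field the Fermat cone surjects onto the `(X, Y)`-plane (`residue_ne_zero`).
-/

open MvPolynomial

set_option synthInstance.maxHeartbeats 1000000
set_option maxHeartbeats 1000000

noncomputable section

/-- The relation between the `l`-th powers of `x`, `1`, `-(x + 1)`, where `l = 2t + 1`. -/
theorem exists_univariate_relation (k : Type*) [Field k] (t : ℕ) :
    ∃ a b c : Polynomial k, a.natDegree ≤ t ∧ b.natDegree ≤ t ∧ c.natDegree ≤ t ∧ c ≠ 0 ∧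
      a * Polynomial.X ^ (2 * t + 1) + b * 1 ^ (2 * t + 1)
        + c * (-(Polynomial.X + 1)) ^ (2 * t + 1) = 0 := by
  let V := Polynomial.degreeLT k (t + 1)
  let φ : (V × V × V) →ₗ[k] Polynomial k :=
    (LinearMap.mulRight k (Polynomial.X ^ (2 * t + 1)) ∘ₗ V.subtype).coprod
      ((LinearMap.mulRight k (1 ^ (2 * t + 1)) ∘ₗ V.subtype).coprod
        (LinearMap.mulRight k ((-(Polynomial.X + 1)) ^ (2 * t + 1)) ∘ₗ V.subtype))
  have hφ : ∀ v, φ v = (v.1 : Polynomial k) * Polynomial.X ^ (2 * t + 1)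
      + ((v.2.1 : Polynomial k) * 1 ^ (2 * t + 1)
        + (v.2.2 : Polynomial k) * (-(Polynomial.X + 1)) ^ (2 * t + 1)) := fun v => rfl
  have hV : ∀ v : V, (v : Polynomial k).natDegree ≤ t := fun v =>
    Polynomial.natDegree_le_iff_coeff_eq_zero.2 fun N hN => Polynomial.coeff_eq_zero_of_degree_lt
      ((Polynomial.mem_degreeLT.1 v.2).trans_le (by exact_mod_cast hN))
  have hlin : (-(Polynomial.X + 1) : Polynomial k).natDegree ≤ 1 := by
    compute_degree
  have hmem : ∀ v, φ v ∈ Polynomial.degreeLT k (3 * t + 2) := by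
    intro v
    rw [Polynomial.mem_degreeLT, hφ]
    refine lt_of_le_of_lt (b := ((3 * t + 1 : ℕ) : WithBot ℕ)) ?_ (by exact_mod_cast Nat.lt_succ_self _)
    rw [← Polynomial.natDegree_le_iff_degree_le]
    have key : ∀ (x : V) (q : Polynomial k), q.natDegree ≤ 1 →
        ((x : Polynomial k) * q ^ (2 * t + 1)).natDegree ≤ 3 * t + 1 := by
      intro x q hq
      refine (Polynomial.natDegree_mul_le_of_le (hV x)
        (Polynomial.natDegree_pow_le_of_le (2 * t + 1) hq)).trans (by omega)
    exact Polynomial.natDegree_add_le_of_degree_le (key _ _ Polynomial.natDegree_X_le)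
      (Polynomial.natDegree_add_le_of_degree_le (key _ _ (by simp)) (key _ _ hlin))
  let e : ∀ m, Polynomial.degreeLT k m ≃ₗ[k] (Fin m → k) := Polynomial.degreeLTEquiv k
  have hfr : ∀ m, Module.finrank k (Polynomial.degreeLT k m) = m := fun m => by
    rw [(e m).finrank_eq, Module.finrank_fin_fun]
  have hfin : ∀ m, FiniteDimensional k (Polynomial.degreeLT k m) := fun m =>
    Module.Finite.equiv (e m).symm
  have hker := LinearMap.ker_ne_bot_of_finrank_lt (f := φ.codRestrict _ hmem) (by
    simp only [Module.finrank_prod, hfr, V]; omega)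
  obtain ⟨v, hv, hv0⟩ := Submodule.exists_mem_ne_zero_of_ne_bot hker
  have hv' : φ v = 0 := by simpa using hv
  rw [hφ] at hv'
  refine ⟨v.1, v.2.1, v.2.2, hV _, hV _, hV _, ?_, by rw [add_assoc]; exact hv'⟩
  intro hc
  rw [hc, zero_mul, add_zero, one_pow, mul_one] at hv'
  have ha : (v.1 : Polynomial k) = 0 := by
    by_contra ha
    -- `b = -a x^l` has degree at least `l > t`.
    have h1 := Polynomial.natDegree_mul_X_pow (2 * t + 1) ha
    rw [eq_neg_of_add_eq_zero_left hv', Polynomial.natDegree_neg] at h1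
    have := hV v.2.1
    omega
  rw [ha, zero_mul, zero_add] at hv'
  exact hv0 (Prod.ext (Subtype.ext ha) (Prod.ext (Subtype.ext hv') (Subtype.ext hc)))

/-- The form `A(X^n, Y^n)` of degree `n * t`, where `A(u, v)` is the homogenization of `a` in
degree `t`. -/
def powForm {k : Type*} [Field k] (n t : ℕ) (a : Polynomial k) : MvP k :=
  aeval ![X 0 ^ n, X 1 ^ n] (a.homogenize t)

theorem powForm_isHomogeneous {k : Type*} [Field k] (n t : ℕ) (a : Polynomial k) :
    (powForm n t a).IsHomogeneous (n * t) :=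
  (Polynomial.isHomogeneous_homogenize a).aeval _ (by
    intro i
    fin_cases i <;> exact isHomogeneous_X_pow _ _)

/-- Over an algebraically closed field, every point `(x, 1)` lifts to a point of the Fermat curve, so
a multiple of the Fermat polynomial in `k[X, Y]` vanishes at it. -/
theorem residue_ne_zero {k : Type*} [Field k] [IsAlgClosed k] {n t : ℕ} (r : ℕ) (hn : 1 ≤ n)
    {c : Polynomial k} (hdeg : c.natDegree ≤ t) (hc : c ≠ 0) :
    fmk k n (X 0 ^ r * X 1 ^ r * powForm n t c) ≠ 0 := by
  intro h
  rw [fmk, qmk, Ideal.Quotient.eq_zero_iff_mem, Ideal.mem_span_singleton] at h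
  obtain ⟨q, hq⟩ := h
  -- The factor `x` removes the point `x = 0`, where `x ^ r` may vanish.
  have hzero : c * Polynomial.X = 0 := by
    refine Polynomial.funext fun s => ?_
    by_cases hs : s = 0
    · simp [hs]
    obtain ⟨x, hx⟩ := IsAlgClosed.exists_pow_nat_eq s hn
    obtain ⟨z, hz⟩ := IsAlgClosed.exists_pow_nat_eq (-(s + 1)) hn
    have hx0 : x ≠ 0 := by
      rintro rfl
      exact hs (by rw [← hx, zero_pow (by omega)])
    have hF : aeval ![x, 1, z] (fermatPoly k n) = 0 := by
      simp [fermatPoly, hx, hz]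
    have hP : aeval ![x, 1, z] (powForm n t c) = c.eval s := by
      have hcomp : (fun i => aeval ![x, 1, z] ((![X 0 ^ n, X 1 ^ n] : Fin 2 → MvP k) i))
          = ![s, 1] := by
        funext i
        fin_cases i <;> simp [hx]
      rw [powForm, ← AlgHom.comp_apply, comp_aeval, hcomp,
        Polynomial.aeval_homogenize_of_eq_one hdeg _ (by simp)]
      simp
    have hev := congrArg (aeval ![x, 1, z]) hq
    rw [map_mul _ (fermatPoly k n), hF, zero_mul, map_mul, hP] at hev
    simp only [map_mul, map_pow, aeval_X, Matrix.cons_val_zero, Matrix.cons_val_one, one_pow,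
      mul_one] at hev
    simp [(mul_eq_zero.1 hev).resolve_left (pow_ne_zero _ hx0)]
  exact hc ((mul_eq_zero.1 hzero).resolve_right Polynomial.X_ne_zero)

/-- The univariate relation, homogenized and carried to the Fermat ring, where `-(X^n + Y^n)` becomes
`Z^n`. -/
theorem powForm_relation {k : Type*} [Field k] (n : ℕ) {t l : ℕ} {a b c : Polynomial k}
    (ha : a.natDegree ≤ t) (hb : b.natDegree ≤ t) (hc : c.natDegree ≤ t)
    (h : a * Polynomial.X ^ l + b * 1 ^ l + c * (-(Polynomial.X + 1)) ^ l = 0) :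
    fmk k n (powForm n t a) * fmk k n (X 0) ^ (n * l)
      + fmk k n (powForm n t b) * fmk k n (X 1) ^ (n * l)
      + fmk k n (powForm n t c) * fmk k n (X 2) ^ (n * l) = 0 := by
  have hlin : (-(Polynomial.X + 1) : Polynomial k).natDegree ≤ 1 := by
    compute_degree
  have hpow : ∀ p : Polynomial k, p.natDegree ≤ 1 →
      (p ^ l).homogenize l = p.homogenize 1 ^ l := by
    intro p hp
    have := Polynomial.homogenize_finsetProd (s := Finset.range l) (p := fun _ => p)
      (n := fun _ => 1) (fun _ _ => hp)
    simpa using this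
  have hdeg : ∀ p : Polynomial k, p.natDegree ≤ 1 → (p ^ l).natDegree ≤ l := fun p hp => by
    simpa using Polynomial.natDegree_pow_le_of_le l hp
  have hh := congrArg (fun p : Polynomial k =>
    aeval (![X 0 ^ n, X 1 ^ n] : Fin 2 → MvP k) (p.homogenize (t + l))) h
  simp only [Polynomial.homogenize_add, Polynomial.homogenize_zero,
    Polynomial.homogenize_mul _ _ ha (hdeg _ Polynomial.natDegree_X_le),
    Polynomial.homogenize_mul _ _ hb (hdeg 1 (by simp)),
    Polynomial.homogenize_mul _ _ hc (hdeg _ hlin),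
    hpow _ Polynomial.natDegree_X_le, hpow 1 (by simp), hpow _ hlin,
    Polynomial.homogenize_neg, Polynomial.homogenize_one, Polynomial.homogenize_X one_ne_zero,
    map_add, map_mul, map_pow, map_neg, map_zero, aeval_X, Matrix.cons_val_zero,
    Matrix.cons_val_one, Nat.sub_self, pow_zero, pow_one, mul_one] at hh
  have hZ : fmk k n (X 2) ^ n = -(fmk k n (X 0) ^ n + fmk k n (X 1) ^ n) := by
    have : fmk k n (fermatPoly k n) = 0 :=
      Ideal.Quotient.eq_zero_iff_mem.2 (Ideal.mem_span_singleton_self _)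
    simp only [fermatPoly, map_add, map_pow] at this
    linear_combination this
  have hf := congrArg (fmk k n) hh
  simp only [map_add, map_mul, map_pow, map_neg, map_zero] at hf
  rw [pow_mul, pow_mul, pow_mul, hZ]
  exact hf

/-- If `b = nl + r` with `l` odd and `3r < n`, then
`Γ(C, Syz_C(X^b,Y^b,Z^b)(n(l+⌊l/2⌋)+3r)) ≠ 0`: there is a nonzero syzygy for
`X^b, Y^b, Z^b` in the Fermat ring whose entries are homogeneous of degree
`n(l+(l-1)/2) + 3r - b = n(l-1)/2 + 2r` (or zero). -/
theorem stmt9 {k : Type*} [Field k] [IsAlgClosed k] {p : ℕ} (hchar : CharP k p)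
    (hp : 0 < p) (n b l r : ℕ) (hn : 1 ≤ n) (hpn : ¬ p ∣ n) (hb : b = n * l + r)
    (hl : Odd l) (hr : r ≤ n - 1) (hr2 : 3 * r < n) :
    ∃ g : Fin 3 → FermatRing k n, g ≠ 0 ∧
      (∀ i, IsHomogZ (g i) (((n * (l + (l - 1) / 2) + 3 * r : ℕ) : ℤ) - b)) ∧
      g 0 * fmk k n (X 0 ^ b) + g 1 * fmk k n (X 1 ^ b) + g 2 * fmk k n (X 2 ^ b) = 0 := by
  obtain ⟨t, rfl⟩ := hl
  obtain ⟨A, B, C, hA, hB, hC, hC0, hrel⟩ := exists_univariate_relation k t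
  have hR := powForm_relation n hA hB hC hrel
  have hhom : ∀ (i j : Fin 3) (P : Polynomial k),
      IsHomogZ (fmk k n (X i ^ r * X j ^ r * powForm n t P))
        (((n * (2 * t + 1 + (2 * t + 1 - 1) / 2) + 3 * r : ℕ) : ℤ) - b) := by
    intro i j P
    refine Or.inr ⟨r + r + n * t, ?_, _, ((isHomogeneous_X_pow i r).mul
      (isHomogeneous_X_pow j r)).mul (powForm_isHomogeneous n t P), rfl⟩
    rw [show (2 * t + 1 - 1) / 2 = t by omega, hb]
    push_cast
    ring
  refine ⟨![fmk k n (X 1 ^ r * X 2 ^ r * powForm n t A),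
    fmk k n (X 0 ^ r * X 2 ^ r * powForm n t B),
    fmk k n (X 0 ^ r * X 1 ^ r * powForm n t C)], ?_, ?_, ?_⟩
  · intro h0
    exact residue_ne_zero r hn hC hC0 (congrFun h0 2)
  · intro i
    fin_cases i
    · exact hhom 1 2 A
    · exact hhom 0 2 B
    · exact hhom 0 1 C
  · simp only [Matrix.cons_val_zero, Matrix.cons_val_one, Matrix.cons_val, map_mul, map_pow, hb,
      pow_add]
    linear_combination (fmk k n (X 0) ^ r * fmk k n (X 1) ^ r * fmk k n (X 2) ^ r) * hR
end
end

section
/- Let n, a ≥ 1 be integers and write a = nl + r with l ≥ 0 and 0 ≤ r < n. Then the following are equivalent: (1) 3r ≤ 2n if l is even, and 3r ≥ n if l is odd; (2) for every triple u = (u₁,u₂,u₃) of natural numbers with u₁+u₂+u₃ odd one has |a/n − u₁| + |a/n − u₂| + |a/n − u₃| ≥ 1. (This is the basic rounding computation underlying the equivalence of conditions (1) and (3) in the paper's theorem on strongly semistable reduction on the relative Fermat curve.) -/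
/-!
Write `a / n = l + t` with `t = r / n ∈ [0, 1)`. A coordinate `v ∉ {l, l + 1}` already contributes at
least `1` to the distance, so only the vertices of the cube `{l, l + 1}³` with odd coordinate sum
matter. A mixed vertex is at distance `1 + t` or `2 - t`, hence at least `1`. The remaining odd
vertex is `(l + 1, l + 1, l + 1)` for `l` even, at distance `3 * (1 - t)`, and `(l, l, l)` for `l`
odd, at distance `3 * t`. Requiring these to be at least `1` is exactly the numerical condition.
-/

open MvPolynomial

set_option synthInstance.maxHeartbeats 1000000
set_option maxHeartbeats 1000000

noncomputable section

/-- Only the two integers enclosing `l + t` are at distance less than `1` from it. -/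
lemma eq_or_eq_succ_or_one_le_abs (l v : ℕ) (t : ℝ) (h0 : 0 ≤ t) (h1 : t < 1) :
    v = l ∨ v = l + 1 ∨ 1 ≤ |(l : ℝ) + t - v| := by
  rcases lt_trichotomy v l with h | h | h
  · have h' : (v : ℝ) + 1 ≤ l := by exact_mod_cast h
    exact Or.inr (Or.inr (le_abs.2 (Or.inl (by linarith))))
  · exact Or.inl h
  · rcases Nat.eq_or_lt_of_le h with h | h
    · exact Or.inr (Or.inl h.symm)
    · have h' : (l : ℝ) + 2 ≤ v := by exact_mod_cast h
      exact Or.inr (Or.inr (le_abs.2 (Or.inr (by linarith))))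

/-- For `a = nl + r`, `0 ≤ r < n`: the numerical condition
(`3r ≤ 2n` if `l` even, `3r ≥ n` if `l` odd) holds iff the taxicab distance from
`(a/n, a/n, a/n)` to every lattice point with odd coordinate sum is at least `1`. -/
theorem stmt13 (n a l r : ℕ) (hn : 1 ≤ n) (ha : 1 ≤ a) (hal : a = n * l + r)
    (hr : r < n) :
    ((Even l → 3 * r ≤ 2 * n) ∧ (Odd l → n ≤ 3 * r)) ↔
      ∀ u : Fin 3 → ℕ, Odd (u 0 + u 1 + u 2) →
        (1 : ℝ) ≤ |(a : ℝ) / n - u 0| + |(a : ℝ) / n - u 1| + |(a : ℝ) / n - u 2| := by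
  have hn0 : (0 : ℝ) < n := by exact_mod_cast hn
  obtain ⟨t, ht⟩ : ∃ t : ℝ, t = (r : ℝ) / n := ⟨_, rfl⟩
  have hrt : (r : ℝ) = n * t := by rw [ht]; field_simp
  have h0 : 0 ≤ t := by rw [ht]; positivity
  have h1 : t < 1 := by rw [ht, div_lt_one hn0]; exact_mod_cast hr
  have hx : (a : ℝ) / n = l + t := by
    rw [hal, ht]; push_cast; field_simp
  have heven : 3 * r ≤ 2 * n ↔ 3 * t ≤ 2 := by
    rw [← Nat.cast_le (α := ℝ)]
    push_cast
    rw [hrt]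
    constructor <;> intro h <;> nlinarith
  have hodd : n ≤ 3 * r ↔ 1 ≤ 3 * t := by
    rw [← Nat.cast_le (α := ℝ)]
    push_cast
    rw [hrt]
    constructor <;> intro h <;> nlinarith
  rw [hx, heven, hodd]
  have habs0 : |(l : ℝ) + t - l| = t := by
    rw [add_sub_cancel_left, abs_of_nonneg h0]
  have habs1 : |(l : ℝ) + t - (l + 1 : ℕ)| = 1 - t := by
    push_cast
    rw [abs_of_nonpos (by linarith)]; ring
  constructor
  · rintro ⟨he, ho⟩ u hu
    have k0 := abs_nonneg ((l : ℝ) + t - u 0)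
    have k1 := abs_nonneg ((l : ℝ) + t - u 1)
    have k2 := abs_nonneg ((l : ℝ) + t - u 2)
    rcases eq_or_eq_succ_or_one_le_abs l (u 0) t h0 h1 with a0 | a0 | a0
    case inr.inr => linarith
    all_goals rcases eq_or_eq_succ_or_one_le_abs l (u 1) t h0 h1 with a1 | a1 | a1
    case inl.inr.inr | inr.inl.inr.inr => linarith
    all_goals rcases eq_or_eq_succ_or_one_le_abs l (u 2) t h0 h1 with a2 | a2 | a2
    case inl.inl.inr.inr | inl.inr.inl.inr.inr | inr.inl.inl.inr.inr |
        inr.inl.inr.inl.inr.inr => linarith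
    all_goals
      rw [a0, a1, a2] at hu ⊢
      simp only [habs0, habs1]
      -- The parity of the vertex determines that of `l`; one of the two implications then applies.
      rcases Nat.even_or_odd l with hl | hl
      · have := he hl
        first
          | linarith
          | (exfalso; rw [Nat.odd_iff] at hu; rw [Nat.even_iff] at hl; omega)
      · have := ho hl
        first
          | linarith
          | (exfalso; rw [Nat.odd_iff] at hu hl; omega)
  · intro h
    constructor
    · intro hl
      have h' := h (fun _ => l + 1) (by rw [Nat.even_iff] at hl; rw [Nat.odd_iff]; omega)
      simp only [habs1] at h'
      linarith
    · intro hl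
      have h' := h (fun _ => l) (by rw [Nat.odd_iff] at hl ⊢; omega)
      simp only [habs0] at h'
      linarith
end
end

section
/- Let n, a ≥ 1 be integers and let r̃ ∈ {0,…,2n−1} be the residue of a modulo 2n. Assume 3r̃ ≤ 2n if r̃ < n, and 3r̃ ≥ 4n if r̃ ≥ n. Then for every prime number p with p ≡ 1 (mod 2n) or p ≡ −1 (mod 2n) and 2np > 3a, the triple (a,n,p) is δ-vanishing, i.e. for every integer s and every triple u = (u₁,u₂,u₃) of natural numbers with u₁+u₂+u₃ odd one has |p^s·a/n − u₁| + |p^s·a/n − u₂| + |p^s·a/n − u₃| ≥ 1. (This is the computation proving that the numerical condition on a mod 2n implies strong semistability of Syz(X^a,Y^a,Z^a) on the Fermat curve of degree n in all characteristics p ≡ ±1 mod 2n.) -/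
/-!
The condition on `a mod 2n` says that `a/n` lies within `2/3` of an even integer. Multiplication by
`p ≡ ±1 (mod 2n)` preserves this property (`near_mul_pow`), and for negative exponents the bound
`2np > 3a` puts `p^s·a/n` within `2/3` of `0`. So every `x = p^s·a/n` has distance `y ≤ 2/3` to
some even integer. An even integer is at distance at least `y` from `x`, an odd one at distance at
least `1 - y` (`abs_sub_even`, `abs_sub_odd`). If `u` has odd coordinate sum, either one or three of
its coordinates are odd, and the taxicab distance is at least `(1 - y) + 2y ≥ 1` or
`3(1 - y) ≥ 1` respectively.
-/

open MvPolynomial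

set_option synthInstance.maxHeartbeats 1000000
set_option maxHeartbeats 1000000

noncomputable section

/-- The taxicab distance from `(p^s·a/n, p^s·a/n, p^s·a/n)` to the lattice point `u`. -/
def taxi (p a n : ℕ) (s : ℤ) (u : Fin 3 → ℕ) : ℝ :=
  |(p : ℝ) ^ s * a / n - u 0| + |(p : ℝ) ^ s * a / n - u 1| + |(p : ℝ) ^ s * a / n - u 2|

/-- `(a,n,p)` is δ-vanishing: for every integer `s`, the taxicab distance from
`(p^s a/n, p^s a/n, p^s a/n)` to every lattice point with odd coordinate sum is at least `1`.
By Han's theorem this is equivalent to the vanishing of Han's syzygy-gap function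
`δ(a/n, a/n, a/n)` in characteristic `p`. -/
def DeltaVanishing (a n p : ℕ) : Prop :=
  ∀ (s : ℤ) (u : Fin 3 → ℕ), Odd (u 0 + u 1 + u 2) → (1 : ℝ) ≤ taxi p a n s u

/-- Since `|y| ≤ 1`, `2k` is a nearest even integer to `2k + y`. -/
lemma abs_sub_even (y : ℝ) (hy : |y| ≤ 1) (k : ℤ) (u : ℕ) (hu : Even u) :
    |y| ≤ |2 * (k : ℝ) + y - u| := by
  obtain ⟨v, rfl⟩ := hu
  obtain ⟨hy1, hy2⟩ := abs_le.1 hy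
  push_cast
  rcases lt_trichotomy (k - v : ℤ) 0 with h | h | h
  · have h' : (k : ℝ) - v ≤ -1 := by exact_mod_cast (by omega : k - (v : ℤ) ≤ -1)
    rw [abs_of_nonpos (by linarith : 2 * (k : ℝ) + y - (v + v) ≤ 0)]
    exact abs_le.2 ⟨by linarith, by linarith⟩
  · have h' : (k : ℝ) - v = 0 := by exact_mod_cast h
    rw [show 2 * (k : ℝ) + y - (v + v) = y by linarith]
  · have h' : (1 : ℝ) ≤ (k : ℝ) - v := by exact_mod_cast (by omega : 1 ≤ k - (v : ℤ))
    rw [abs_of_nonneg (by linarith : 0 ≤ 2 * (k : ℝ) + y - (v + v))]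
    exact abs_le.2 ⟨by linarith, by linarith⟩

lemma abs_sub_odd (y : ℝ) (k : ℤ) (u : ℕ) (hu : Odd u) :
    1 - |y| ≤ |2 * (k : ℝ) + y - u| := by
  have h : (1 : ℝ) ≤ |2 * (k : ℝ) - u| := by
    obtain ⟨v, rfl⟩ := hu
    exact_mod_cast Int.one_le_abs (by push_cast; omega : 2 * k - ((2 * v + 1 : ℕ) : ℤ) ≠ 0)
  have h3 := abs_sub (2 * (k : ℝ) + y - u) y
  rw [show 2 * (k : ℝ) + y - u - y = 2 * (k : ℝ) - u by ring] at h3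
  linarith

lemma one_le_taxi (p a n : ℕ) (s : ℤ) (u : Fin 3 → ℕ) (hu : Odd (u 0 + u 1 + u 2))
    (k : ℤ) (y : ℝ) (hx : (p : ℝ) ^ s * a / n = 2 * k + y) (hy : |y| ≤ 2 / 3) :
    1 ≤ taxi p a n s u := by
  have he := abs_sub_even y (by linarith) k
  have ho := abs_sub_odd y k
  have h0 := abs_nonneg y
  unfold taxi
  rw [hx]
  rcases Nat.even_or_odd (u 0) with a0 | a0 <;> rcases Nat.even_or_odd (u 1) with a1 | a1 <;>
    rcases Nat.even_or_odd (u 2) with a2 | a2 <;>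
    first
    | (exfalso; revert hu; simp only [Nat.odd_iff, Nat.even_iff] at *; omega)
    | linarith [he _ a0, he _ a1, ho _ a2]
    | linarith [he _ a0, ho _ a1, he _ a2]
    | linarith [ho _ a0, he _ a1, he _ a2]
    | linarith [ho _ a0, ho _ a1, ho _ a2]

/-- The integers `a` with `a/n` within `2/3` of an even integer are stable under multiplication by
integers that are `±1` modulo `2n`; `t` is the signed remainder of `a * p ^ m` modulo `2n`. -/
lemma near_mul_pow (n a p : ℤ)
    (h : ∃ k t : ℤ, a = 2 * n * k + t ∧ 3 * |t| ≤ 2 * n)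
    (hp : p ≡ 1 [ZMOD 2 * n] ∨ p ≡ -1 [ZMOD 2 * n]) (m : ℕ) :
    ∃ k t : ℤ, p ^ m * a = 2 * n * k + t ∧ 3 * |t| ≤ 2 * n := by
  induction m with
  | zero => simpa using h
  | succ m ih =>
    obtain ⟨k, t, e, ht⟩ := ih
    rcases hp with hp | hp
    · obtain ⟨c, hc⟩ := hp.symm.dvd
      refine ⟨k + c * (p ^ m * a), t, ?_, ht⟩
      linear_combination e + p ^ m * a * hc
    · obtain ⟨c, hc⟩ := hp.symm.dvd
      refine ⟨-k + c * (p ^ m * a), -t, ?_, by rwa [abs_neg]⟩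
      linear_combination -e + p ^ m * a * hc

/-- If the residue `r̃ = a % 2n` satisfies `3r̃ ≤ 2n` when `r̃ < n` and
`3r̃ ≥ 4n` when `r̃ ≥ n`, then `(a,n,p)` is δ-vanishing for every prime `p ≡ ±1 (mod 2n)`
with `2np > 3a`. -/
theorem stmt14 (n a : ℕ) (hn : 1 ≤ n) (ha : 1 ≤ a)
    (h1 : a % (2 * n) < n → 3 * (a % (2 * n)) ≤ 2 * n)
    (h2 : n ≤ a % (2 * n) → 4 * n ≤ 3 * (a % (2 * n))) :
    ∀ p : ℕ, p.Prime →
      ((p : ℤ) ≡ 1 [ZMOD (2 * (n : ℤ))] ∨ (p : ℤ) ≡ -1 [ZMOD (2 * (n : ℤ))]) →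
      3 * a < 2 * n * p → DeltaVanishing a n p := by
  intro p hp hmod hlt s u hu
  have hn0 : (0 : ℝ) < n := by exact_mod_cast hn
  have hp1 : (1 : ℝ) ≤ p := by exact_mod_cast hp.one_le
  rcases le_or_gt 0 s with hs | hs
  · lift s to ℕ using hs
    have hnear : ∃ k t : ℤ, (a : ℤ) = 2 * n * k + t ∧ 3 * |t| ≤ 2 * n := by
      have hdiv : (2 * n : ℤ) * ((a / (2 * n) : ℕ) : ℤ) + ((a % (2 * n) : ℕ) : ℤ) = a := by
        exact_mod_cast Nat.div_add_mod a (2 * n)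
      have hmodlt : a % (2 * n) < 2 * n := Nat.mod_lt _ (by omega)
      generalize a % (2 * n) = r at *
      generalize a / (2 * n) = q at *
      rcases lt_or_ge r n with hr | hr
      · refine ⟨q, r, hdiv.symm, ?_⟩
        rw [abs_of_nonneg (by positivity)]
        exact_mod_cast h1 hr
      · refine ⟨q + 1, r - 2 * n, by linear_combination -hdiv, ?_⟩
        have := h2 hr
        rw [abs_of_nonpos (by omega)]
        omega
    obtain ⟨k, t, e, ht⟩ := near_mul_pow n a p hnear hmod s
    have e' : (p : ℝ) ^ s * a = 2 * n * k + t := by exact_mod_cast e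
    have ht' : 3 * |(t : ℝ)| ≤ 2 * n := by exact_mod_cast ht
    refine one_le_taxi p a n s u hu k (t / n) ?_ ?_
    · rw [zpow_natCast, e']
      field_simp
    · rw [abs_div, abs_of_pos hn0, div_le_div_iff₀ hn0 (by norm_num)]
      linarith
  · refine one_le_taxi p a n s u hu 0 ((p : ℝ) ^ s * a / n) (by simp) ?_
    have hs' : (p : ℝ) ^ s ≤ (p : ℝ)⁻¹ := by
      rw [← zpow_neg_one]
      exact zpow_le_zpow_right₀ hp1 (by omega)
    have hlt' : 3 * (a : ℝ) < 2 * n * p := by exact_mod_cast hlt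
    rw [abs_of_nonneg (by positivity)]
    calc (p : ℝ) ^ s * a / n ≤ (p : ℝ)⁻¹ * a / n := by gcongr
      _ ≤ 2 / 3 := by
        rw [inv_mul_eq_div, div_div, div_le_div_iff₀ (by positivity) (by norm_num)]
        linarith
end
end

section
/- Let n ≥ 3 be an odd integer. Then (1,n,2) is δ-vanishing — i.e. for every integer s and every triple u = (u₁,u₂,u₃) of natural numbers with u₁+u₂+u₃ odd one has |2^s/n − u₁| + |2^s/n − u₂| + |2^s/n − u₃| ≥ 1 — if and only if n = 3. (This is the computation showing that in characteristic two the restricted cotangent bundle Ω_{P²}|_C on the Fermat curve of degree n admits a twisted Frobenius periodicity if and only if n = 3.) -/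
/-!
Write `x = 2 ^ s / n`. If `|x - 1| < 1 / 3`, the lattice point `(1, 1, 1)` has taxicab distance
`3 |x - 1| < 1`, so it obstructs δ-vanishing. The interval `(2 / 3, 4 / 3]` is a fundamental domain
for doubling on the positive reals, hence contains `2 ^ k / n` for some `k`, and the excluded value
`4 / 3` can occur for odd `n ≥ 3` only if `n = 3` (`exists_two_pow_near`).

For `n = 3`, if `s ≥ 0` then each coordinate contributes at least `1 / 3`, because `3 ∤ 2 ^ s`
(`third_le_abs`). If `s < 0` then `0 < x ≤ 1 / 2`; some coordinate of `u` is nonzero and contributes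
at least `1 - x`, while each of the other two contributes at least `x`.
-/

open MvPolynomial

set_option synthInstance.maxHeartbeats 1000000
set_option maxHeartbeats 1000000

noncomputable section

/-- Since `3` does not divide `2 ^ k`, the number `2 ^ k / 3` lies at distance at least `1 / 3` from
every natural number. -/
lemma third_le_abs (k m : ℕ) : (1 : ℝ) / 3 ≤ |(2 : ℝ) ^ k / 3 - m| := by
  have hne : (2 : ℤ) ^ k - 3 * m ≠ 0 := by
    intro h
    have h3 : (3 : ℤ) ∣ 2 ^ k := ⟨m, by linarith⟩
    have h2 := Int.prime_three.dvd_of_dvd_pow h3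
    omega
  have h1 : (1 : ℝ) ≤ |(2 : ℝ) ^ k - 3 * m| := by
    exact_mod_cast Int.one_le_abs hne
  have h2 : (2 : ℝ) ^ k / 3 - m = ((2 : ℝ) ^ k - 3 * m) / 3 := by ring
  rw [h2, abs_div, abs_of_pos (by norm_num : (0 : ℝ) < 3)]
  linarith

/-- A point of `[0, 1 / 2]` is at least as close to `0` as to any other natural number. -/
lemma le_abs_sub_natCast {x : ℝ} (hx : x ≤ 1 / 2) (m : ℕ) : x ≤ |x - m| := by
  rcases Nat.eq_zero_or_pos m with rfl | hm
  · simpa using le_abs_self x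
  · have : (1 : ℝ) ≤ m := by exact_mod_cast hm
    have := neg_le_abs (x - m)
    linarith

lemma one_sub_le_abs_sub_natCast (x : ℝ) {m : ℕ} (hm : 0 < m) : 1 - x ≤ |x - m| := by
  have : (1 : ℝ) ≤ m := by exact_mod_cast hm
  have := neg_le_abs (x - m)
  linarith

lemma deltaVanishing_three : DeltaVanishing 1 3 2 := by
  intro s u hu
  unfold taxi
  push_cast
  rw [mul_one]
  rcases le_or_gt 0 s with hs | hs
  · lift s to ℕ using hs
    rw [zpow_natCast]
    linarith [third_le_abs s (u 0), third_le_abs s (u 1), third_le_abs s (u 2)]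
  · have hpos : (0 : ℝ) < 2 ^ s := by positivity
    have hle : (2 : ℝ) ^ s ≤ 1 := zpow_le_one_of_nonpos₀ (by norm_num) hs.le
    set x : ℝ := 2 ^ s / 3 with hx
    have hx0 : 0 < x := by positivity
    have hx1 : x ≤ 1 / 2 := by linarith
    have h0 := le_abs_sub_natCast hx1 (u 0)
    have h1 := le_abs_sub_natCast hx1 (u 1)
    have h2 := le_abs_sub_natCast hx1 (u 2)
    -- An odd coordinate sum rules out the origin.
    have hor : 0 < u 0 ∨ 0 < u 1 ∨ 0 < u 2 := by
      have := hu.pos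
      omega
    rcases hor with h | h | h <;> linarith [one_sub_le_abs_sub_natCast x h]

/-- The endpoints of `(2 / 3, 4 / 3]` have ratio `2`, so some power of two lands in that interval
after division by `n`; the right endpoint would mean `3 * 2 ^ k = 4 * n`, hence `n ∣ 3`. -/
lemma exists_two_pow_near (n : ℕ) (hn : 3 ≤ n) (hodd : Odd n) (h3 : n ≠ 3) :
    ∃ k : ℕ, 2 * n < 3 * 2 ^ k ∧ 3 * 2 ^ k < 4 * n := by
  have hex : ∃ k : ℕ, 2 * n < 3 * 2 ^ k :=
    ⟨n, by have := Nat.lt_two_pow_self (n := n); omega⟩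
  obtain ⟨k, hk, hmin⟩ : ∃ k : ℕ, 2 * n < 3 * 2 ^ k ∧ ∀ j < k, ¬ 2 * n < 3 * 2 ^ j :=
    ⟨Nat.find hex, Nat.find_spec hex, fun j hj => Nat.find_min hex hj⟩
  refine ⟨k, hk, ?_⟩
  obtain _ | j := k
  · omega
  have hj := hmin j (Nat.lt_succ_self j)
  have hle : 3 * 2 ^ (j + 1) ≤ 4 * n := by rw [pow_succ]; omega
  refine lt_of_le_of_ne hle fun heq => h3 ?_
  have hcop : Nat.Coprime n (2 ^ (j + 1)) :=
    Nat.Coprime.pow_right _ (Nat.coprime_two_right.mpr hodd)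
  have hdvd : n ∣ 3 := hcop.dvd_of_dvd_mul_right ⟨4, by linarith⟩
  exact le_antisymm (Nat.le_of_dvd (by norm_num) hdvd) hn

/-- For odd `n ≥ 3`, the triple `(1, n, 2)` is δ-vanishing iff `n = 3`. -/
theorem stmt15 (n : ℕ) (hn : 3 ≤ n) (hodd : Odd n) : DeltaVanishing 1 n 2 ↔ n = 3 := by
  constructor
  · intro h
    by_contra h3
    obtain ⟨k, hk1, hk2⟩ := exists_two_pow_near n hn hodd h3
    have hd := h k (fun _ => 1) (by decide)
    have hn0 : (0 : ℝ) < n := by exact_mod_cast (by omega : 0 < n)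
    have hk1' : (2 : ℝ) * n < 3 * 2 ^ k := by exact_mod_cast hk1
    have hk2' : (3 : ℝ) * 2 ^ k < 4 * n := by exact_mod_cast hk2
    have hlo : (2 : ℝ) / 3 < 2 ^ k / n := by
      rw [div_lt_div_iff₀ (by norm_num) hn0]
      linarith
    have hhi : (2 : ℝ) ^ k / n < 4 / 3 := by
      rw [div_lt_div_iff₀ hn0 (by norm_num)]
      linarith
    have hlt : |(2 : ℝ) ^ k / n - 1| < 1 / 3 := by
      rw [abs_lt]
      constructor <;> linarith
    simp only [taxi, Nat.cast_ofNat, Nat.cast_one, mul_one, zpow_natCast] at hd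
    linarith
  · rintro rfl
    exact deltaVanishing_three
end
end
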